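/- arXiv:1101.1936 — 4 statements merged into one kernel-verified Lean document; each statement's English description precedes it below -/
import Mathlib

section
/- Let R be a right artinian ring and M a finitely generated right R-module of finite projective dimension. Then φ(M) equals the projective dimension of M, where φ is the Igusa–Todorov function. -/
open Module Function

universe u

variable (R : Type u) [Ring R]

/-- A finitely generated right `R`-module, encoded as a module over `Rᵐᵒᵖ`. -/
structure FGMod where
  carrier : Type u
  [isAddCommGroup : AddCommGroup carrier]
  [isModule : Module Rᵐᵒᵖ carrier]
  [isFinite : Module.Finite Rᵐᵒᵖ carrier]

attribute [instance] FGMod.isAddCommGroup FGMod.isModule FGMod.isFinite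

instance : CoeSort (FGMod R) (Type u) := ⟨FGMod.carrier⟩

variable {R}

/-- Isomorphism of f.g. right modules. -/
def FGMod.Iso (M N : FGMod R) : Prop := Nonempty (M ≃ₗ[Rᵐᵒᵖ] N)

/-- Direct sum. -/
def FGMod.prod (M N : FGMod R) : FGMod R := ⟨M × N⟩

/-- `M^k`, the direct sum of `k` copies of `M`. -/
def FGMod.pow (M : FGMod R) (k : ℕ) : FGMod R := ⟨Fin k → M⟩

/-- `N` is (isomorphic to) a direct summand of `M`. -/
def FGMod.IsSummand (N M : FGMod R) : Prop :=
  ∃ A B : Submodule Rᵐᵒᵖ M, IsCompl A B ∧ Nonempty (N ≃ₗ[Rᵐᵒᵖ] A)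

/-- `M` is indecomposable. -/
def FGMod.Indec (M : FGMod R) : Prop :=
  Nontrivial M ∧ ∀ A B : Submodule Rᵐᵒᵖ M, IsCompl A B → A = ⊥ ∨ B = ⊥

/-- `M` is projective. -/
def FGMod.Proj (M : FGMod R) : Prop := Module.Projective Rᵐᵒᵖ M

/-- `f : P → M` is a projective cover: `P` projective, `f` surjective with superfluous kernel. -/
def IsProjCover (M P : FGMod R) (f : P →ₗ[Rᵐᵒᵖ] M) : Prop :=
  P.Proj ∧ Surjective f ∧ ∀ N : Submodule Rᵐᵒᵖ P, N ⊔ LinearMap.ker f = ⊤ → N = ⊤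

/-- `N` is a (first) syzygy of `M`: the kernel of a projective cover of `M`. -/
def IsSyzygy (M N : FGMod R) : Prop :=
  ∃ (P : FGMod R) (f : P →ₗ[Rᵐᵒᵖ] M),
    IsProjCover M P f ∧ Nonempty (N ≃ₗ[Rᵐᵒᵖ] LinearMap.ker f)

/-- `N` is an `n`-th syzygy of `M`. -/
def IsSyzygyN : ℕ → FGMod R → FGMod R → Prop
  | 0, M, N => M.Iso N
  | n+1, M, N => ∃ L, IsSyzygy M L ∧ IsSyzygyN n L N

/-- `M` has projective dimension at most `n`. -/
def HasPdLE : ℕ → FGMod R → Prop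
  | 0, M => M.Proj
  | n+1, M => M.Proj ∨ ∃ N, IsSyzygy M N ∧ HasPdLE n N

/-- `M` has finite projective dimension. -/
def FinPd (M : FGMod R) : Prop := ∃ n, HasPdLE n M

/-- The projective dimension of `M` (junk value if infinite). -/
noncomputable def pdIT (M : FGMod R) : ℕ := sInf {n | HasPdLE n M}

variable (R)

/-- The Igusa–Todorov relations in the free abelian group on f.g. right modules:
`[A] - [B] - [C]` whenever `A ≅ B ⊕ C`, and `[P]` for `P` projective. -/
def ITRel : Set (FreeAbelianGroup (FGMod R)) :=
  {x | ∃ A B C : FGMod R, Nonempty (A ≃ₗ[Rᵐᵒᵖ] (B × C : Type u)) ∧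
        x = FreeAbelianGroup.of A - FreeAbelianGroup.of B - FreeAbelianGroup.of C} ∪
  {x | ∃ P : FGMod R, P.Proj ∧ x = FreeAbelianGroup.of P}

/-- The Igusa–Todorov group `K`. -/
def ITK := FreeAbelianGroup (FGMod R) ⧸ AddSubgroup.closure (ITRel R)

noncomputable instance : AddCommGroup (ITK R) :=
  QuotientAddGroup.Quotient.addCommGroup _

/-- The class `[M]` in `K`. -/
noncomputable def ITcls (M : FGMod R) : ITK R := QuotientAddGroup.mk (FreeAbelianGroup.of M)

/-- `⟨M⟩`: the subgroup of `K` generated by the indecomposable non-projective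
direct summands of `M`. -/
noncomputable def ITgen (M : FGMod R) : AddSubgroup (ITK R) :=
  AddSubgroup.closure
    {x | ∃ N : FGMod R, N.IsSummand M ∧ N.Indec ∧ ¬N.Proj ∧ x = ITcls R N}

/-- The rank of a subgroup of `K`. -/
noncomputable def rkIT (H : AddSubgroup (ITK R)) : ℕ :=
  Module.finrank ℤ (AddSubgroup.toIntSubmodule H)

/-- `OmK` is a syzygy endomorphism of `K`: a group endomorphism sending `[M]` to `[ΩM]`. -/
def IsSyzygyEnd (OmK : AddMonoid.End (ITK R)) : Prop :=
  ∀ M N : FGMod R, IsSyzygy M N → OmK (ITcls R M) = ITcls R N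

/-- The Igusa–Todorov function `φ`: the least `n` such that the rank of
`Ω^i⟨M⟩` equals that of `Ω^n⟨M⟩` for all `i ≥ n`. -/
noncomputable def phiIT (OmK : AddMonoid.End (ITK R)) (M : FGMod R) : ℕ :=
  sInf {n | ∀ i, n ≤ i →
    rkIT R ((ITgen R M).map ((OmK ^ i : AddMonoid.End (ITK R)) : ITK R →+ ITK R))
      = rkIT R ((ITgen R M).map ((OmK ^ n : AddMonoid.End (ITK R)) : ITK R →+ ITK R))}

/-- The second Igusa–Todorov function `ψ`. -/
noncomputable def psiIT (OmK : AddMonoid.End (ITK R)) (M : FGMod R) : ℕ :=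
  phiIT R OmK M + sSup {d | ∃ N X : FGMod R, IsSyzygyN (phiIT R OmK M) M N ∧
      X.IsSummand N ∧ FinPd X ∧ d = pdIT X}

/-- The socle of a module: the sum of its simple submodules. -/
def socleIT (M : FGMod R) : Submodule Rᵐᵒᵖ M :=
  sSup {S : Submodule Rᵐᵒᵖ M | IsSimpleModule Rᵐᵒᵖ S}


section ITHelpers

variable {R}

theorem it_len_ne_top [IsArtinianRing Rᵐᵒᵖ] (M : FGMod R) : Module.length Rᵐᵒᵖ M ≠ ⊤ :=
  Module.length_ne_top

/-- Length of a module as an integer. -/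
noncomputable def itLen (M : FGMod R) : ℕ := (Module.length Rᵐᵒᵖ M).toNat

theorem it_coe_len [IsArtinianRing Rᵐᵒᵖ] (M : FGMod R) :
    (itLen M : ℕ∞) = Module.length Rᵐᵒᵖ M := ENat.natCast_toNat (it_len_ne_top M)

/-- Retract formulation of summands. -/
def ITRetr (N M : FGMod R) : Prop :=
  ∃ (i : N →ₗ[Rᵐᵒᵖ] M) (p : M →ₗ[Rᵐᵒᵖ] N), ∀ x, p (i x) = x

theorem it_retr_of_summand {N M : FGMod R} (h : N.IsSummand M) : ITRetr N M := by
  obtain ⟨A, B, hAB, ⟨e⟩⟩ := h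
  refine ⟨A.subtype ∘ₗ e.toLinearMap, e.symm.toLinearMap ∘ₗ LinearMap.fst _ _ _ ∘ₗ
    (Submodule.prodEquivOfIsCompl A B hAB).symm.toLinearMap, fun x => ?_⟩
  simp

theorem it_summand_of_retr {N M : FGMod R} (h : ITRetr N M) : N.IsSummand M := by
  obtain ⟨i, p, h⟩ := h
  refine ⟨LinearMap.range i, LinearMap.ker p, ?_, ⟨LinearEquiv.ofInjective i ?_⟩⟩
  · constructor
    · rw [Submodule.disjoint_def]
      rintro _ ⟨x, rfl⟩ hx
      rw [LinearMap.mem_ker, h] at hx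
      simp [hx]
    · rw [codisjoint_iff, eq_top_iff]
      intro x _
      have : x = i (p x) + (x - i (p x)) := by abel
      rw [this]
      refine Submodule.add_mem_sup ⟨_, rfl⟩ ?_
      simp [h]
  · exact (show Function.LeftInverse p i from h).injective

theorem it_retr_trans {A B C : FGMod R} (h : ITRetr A B) (h' : ITRetr B C) : ITRetr A C := by
  obtain ⟨i, p, h⟩ := h
  obtain ⟨i', p', h'⟩ := h'
  exact ⟨i' ∘ₗ i, p ∘ₗ p', fun x => by simp [h, h']⟩

theorem it_retr_left {M A B : FGMod R} (e : M ≃ₗ[Rᵐᵒᵖ] (A × B : Type u)) : ITRetr A M :=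
  ⟨e.symm.toLinearMap ∘ₗ LinearMap.inl _ _ _, LinearMap.fst _ _ _ ∘ₗ e.toLinearMap,
    fun x => by simp⟩

theorem it_retr_right {M A B : FGMod R} (e : M ≃ₗ[Rᵐᵒᵖ] (A × B : Type u)) : ITRetr B M :=
  ⟨e.symm.toLinearMap ∘ₗ LinearMap.inr _ _ _, LinearMap.snd _ _ _ ∘ₗ e.toLinearMap,
    fun x => by simp⟩

theorem it_proj_of_retr {A B : FGMod R} (h : ITRetr A B) (hB : B.Proj) : A.Proj := by
  obtain ⟨i, p, h⟩ := h
  have : Module.Projective Rᵐᵒᵖ B := hB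
  exact Module.Projective.of_split i p (LinearMap.ext h)

theorem it_unit_or [IsArtinianRing Rᵐᵒᵖ] {N : FGMod R} (hN : N.Indec)
    (f : Module.End Rᵐᵒᵖ N) : IsNilpotent f ∨ IsUnit f := by
  obtain ⟨n, hn⟩ := (f.eventually_isCompl_ker_pow_range_pow.and
    (Filter.eventually_ge_atTop 1)).exists
  obtain ⟨hn, h1⟩ := hn
  rcases hN.2 _ _ hn with h | h
  · right
    have h2 : LinearMap.range (f ^ n) = ⊤ := by
      have := hn.sup_eq_top
      rwa [h, bot_sup_eq] at this
    have : IsUnit (f ^ n) := by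
      rw [Module.End.isUnit_iff]
      exact ⟨LinearMap.ker_eq_bot.1 h, LinearMap.range_eq_top.1 h2⟩
    exact (isUnit_pow_iff (by omega)).1 this
  · left
    exact ⟨n, LinearMap.range_eq_bot.1 h⟩

theorem it_retr_of_unit {N A : FGMod R} (i : N →ₗ[Rᵐᵒᵖ] A) (p : A →ₗ[Rᵐᵒᵖ] N)
    (h : IsUnit (p ∘ₗ i : Module.End Rᵐᵒᵖ N)) : ITRetr N A := by
  obtain ⟨g, hg⟩ := h.exists_left_inv
  exact ⟨i, g ∘ₗ p, fun x => LinearMap.congr_fun hg x⟩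

theorem it_retr_or [IsArtinianRing Rᵐᵒᵖ] {N M A B : FGMod R} (hN : N.Indec)
    (e : M ≃ₗ[Rᵐᵒᵖ] (A × B : Type u)) (h : ITRetr N M) : ITRetr N A ∨ ITRetr N B := by
  obtain ⟨i, p, h⟩ := h
  let iA := LinearMap.fst _ _ _ ∘ₗ e.toLinearMap ∘ₗ i
  let iB := LinearMap.snd _ _ _ ∘ₗ e.toLinearMap ∘ₗ i
  let pA := p ∘ₗ e.symm.toLinearMap ∘ₗ LinearMap.inl Rᵐᵒᵖ A B
  let pB := p ∘ₗ e.symm.toLinearMap ∘ₗ LinearMap.inr Rᵐᵒᵖ A B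
  have key : (pB ∘ₗ iB : Module.End Rᵐᵒᵖ N) = 1 - (pA ∘ₗ iA : Module.End Rᵐᵒᵖ N) := by
    rw [eq_sub_iff_add_eq]
    ext x
    have : p (e.symm (e (i x))) = x := by simp [h]
    simp only [LinearMap.add_apply, LinearMap.comp_apply, pA, pB, iA, iB, Module.End.one_apply]
    rw [← map_add]
    simp only [LinearEquiv.coe_coe, ← map_add]
    simpa using this
  rcases it_unit_or hN (pA ∘ₗ iA) with h1 | h1
  · right
    apply it_retr_of_unit iB pB
    rw [key]
    exact h1.isUnit_one_sub
  · left
    exact it_retr_of_unit iA pA h1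

theorem it_iso_of_retr_indec {N A : FGMod R} (hN : Nontrivial N) (hA : A.Indec)
    (h : ITRetr N A) : Nonempty (N ≃ₗ[Rᵐᵒᵖ] A) := by
  obtain ⟨X, Y, hXY, ⟨e⟩⟩ := it_summand_of_retr h
  rcases hA.2 X Y hXY with h | h
  · subst h
    exact absurd e.toEquiv.subsingleton (not_subsingleton _)
  · have hX : X = ⊤ := by
      have := hXY.sup_eq_top
      rwa [h, sup_bot_eq] at this
    subst hX
    exact ⟨e.trans Submodule.topEquiv⟩

theorem it_cls_add {A B C : FGMod R} (e : A ≃ₗ[Rᵐᵒᵖ] (B × C : Type u)) :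
    ITcls R A = ITcls R B + ITcls R C := by
  have : (QuotientAddGroup.mk (FreeAbelianGroup.of A - FreeAbelianGroup.of B -
      FreeAbelianGroup.of C) : ITK R) = (0 : ITK R) :=
    (QuotientAddGroup.eq_zero_iff _).2 (AddSubgroup.subset_closure (Or.inl ⟨A, B, C, ⟨e⟩, rfl⟩))
  have h2 : ITcls R A - ITcls R B - ITcls R C = 0 := this
  rw [sub_sub, sub_eq_zero] at h2
  exact h2

theorem it_cls_proj {P : FGMod R} (h : P.Proj) : ITcls R P = 0 :=
  (QuotientAddGroup.eq_zero_iff _).2 (AddSubgroup.subset_closure (Or.inr ⟨P, h, rfl⟩))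

theorem it_cls_iso {A B : FGMod R} (e : A ≃ₗ[Rᵐᵒᵖ] B) : ITcls R A = ITcls R B := by
  let Z : FGMod R := ⟨PUnit.{u+1}⟩
  have hZ : Z.Proj := (inferInstance : Module.Projective Rᵐᵒᵖ PUnit.{u+1})
  have := it_cls_add (A := A) (B := B) (C := Z) (e.trans (LinearEquiv.prodUnique).symm)
  rw [this, it_cls_proj hZ, add_zero]

theorem it_decomp [IsArtinianRing Rᵐᵒᵖ] (M : FGMod R) (h1 : Nontrivial M) (h2 : ¬ M.Indec) :
    ∃ (A B : FGMod R), itLen A < itLen M ∧ itLen B < itLen M ∧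
      Nonempty (M ≃ₗ[Rᵐᵒᵖ] (A × B : Type u)) := by
  have : ∃ A B : Submodule Rᵐᵒᵖ M, IsCompl A B ∧ A ≠ ⊥ ∧ B ≠ ⊥ := by
    by_contra hc
    push Not at hc
    exact h2 ⟨h1, fun A B h => or_iff_not_imp_left.2 (hc A B h)⟩
  obtain ⟨A, B, h, hA, hB⟩ := this
  refine ⟨⟨A⟩, ⟨B⟩, ?_, ?_, ⟨(Submodule.prodEquivOfIsCompl A B h).symm⟩⟩
  · have : A ≠ ⊤ := by
      rintro rfl
      exact hB (by simpa using h.inf_eq_bot)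
    have := Submodule.length_lt this
    rw [← it_coe_len M, ← it_coe_len (⟨A⟩ : FGMod R)] at this
    exact_mod_cast this
  · have : B ≠ ⊤ := by
      rintro rfl
      exact hA (by simpa using h.inf_eq_bot)
    have := Submodule.length_lt this
    rw [← it_coe_len M, ← it_coe_len (⟨B⟩ : FGMod R)] at this
    exact_mod_cast this

theorem it_finite [IsArtinianRing Rᵐᵒᵖ] (n : ℕ) : ∀ M : FGMod R, itLen M = n →
    {x | ∃ N : FGMod R, ITRetr N M ∧ N.Indec ∧ x = ITcls R N}.Finite ∧
      ITcls R M ∈ ITgen R M := by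
  induction n using Nat.strong_induction_on with
  | _ n ih =>
  intro M hM
  rcases subsingleton_or_nontrivial M with hs | hs
  · constructor
    · convert Set.finite_empty
      rw [Set.eq_empty_iff_forall_notMem]
      rintro x ⟨N, ⟨i, p, h⟩, hN, -⟩
      have := hN.1
      exact absurd ((show Function.LeftInverse p i from h).injective.subsingleton)
        (not_subsingleton N)
    · rw [it_cls_proj (show Module.Projective Rᵐᵒᵖ M from inferInstance)]
      exact zero_mem _
  by_cases hI : M.Indec
  · constructor
    · refine (Set.finite_singleton (ITcls R M)).subset ?_
      rintro x ⟨N, h, hN, rfl⟩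
      obtain ⟨e⟩ := it_iso_of_retr_indec hN.1 hI h
      exact it_cls_iso e
    · by_cases hP : M.Proj
      · rw [it_cls_proj hP]
        exact zero_mem _
      · exact AddSubgroup.subset_closure
          ⟨M, it_summand_of_retr ⟨LinearMap.id, LinearMap.id, fun _ => rfl⟩, hI, hP, rfl⟩
  · obtain ⟨A, B, hA, hB, ⟨e⟩⟩ := it_decomp M hs hI
    have iA := ih _ (hM ▸ hA) A rfl
    have iB := ih _ (hM ▸ hB) B rfl
    constructor
    · refine (iA.1.union iB.1).subset ?_
      rintro x ⟨N, h, hN, rfl⟩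
      rcases it_retr_or hN e h with h' | h'
      · exact Or.inl ⟨N, h', hN, rfl⟩
      · exact Or.inr ⟨N, h', hN, rfl⟩
    · have mono : ∀ X : FGMod R, ITRetr X M → ITgen R X ≤ ITgen R M := by
        intro X hX
        apply AddSubgroup.closure_mono
        rintro x ⟨N, h, hN⟩
        exact ⟨N, it_summand_of_retr (it_retr_trans (it_retr_of_summand h) hX), hN⟩
      rw [it_cls_add e]
      exact add_mem (mono A (it_retr_left e) iA.2) (mono B (it_retr_right e) iB.2)

/-- Existence of projective covers. -/
theorem it_exists_cover [IsArtinianRing Rᵐᵒᵖ] (M : FGMod R) :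
    ∃ (P : FGMod R) (f : P →ₗ[Rᵐᵒᵖ] M), IsProjCover M P f := by
  classical
  have hex : ∃ n, ∃ (P : FGMod R) (f : P →ₗ[Rᵐᵒᵖ] M), P.Proj ∧ Surjective f ∧ itLen P = n := by
    obtain ⟨n, f, hf⟩ := Module.Finite.exists_fin' Rᵐᵒᵖ M
    let P : FGMod R := ⟨Fin n → Rᵐᵒᵖ⟩
    exact ⟨_, P, f, (inferInstance : Module.Projective Rᵐᵒᵖ (Fin n → Rᵐᵒᵖ)), hf, rfl⟩
  obtain ⟨P, f, hP, hf, hlen⟩ := Nat.find_spec hex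
  refine ⟨P, f, hP, hf, fun N hN => ?_⟩
  by_contra hne
  have hPP : Module.Projective Rᵐᵒᵖ P := hP
  have hsurj : Surjective (f ∘ₗ N.subtype) := by
    intro m
    obtain ⟨x, rfl⟩ := hf m
    have hx : x ∈ N ⊔ LinearMap.ker f := hN ▸ Submodule.mem_top
    obtain ⟨y, hy, z, hz, rfl⟩ := Submodule.mem_sup.1 hx
    exact ⟨⟨y, hy⟩, by simp [LinearMap.mem_ker.1 hz]⟩
  obtain ⟨h, hh⟩ := Module.projective_lifting_property (f ∘ₗ N.subtype) f hsurj
  let g : Module.End Rᵐᵒᵖ P := N.subtype ∘ₗ h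
  have hg : ∀ x, f (g x) = f x := fun x => LinearMap.congr_fun hh x
  have hgn : ∀ n x, f ((g ^ n) x) = f x := by
    intro n
    induction n with
    | zero => intro x; rfl
    | succ n ih => intro x; rw [pow_succ, Module.End.mul_apply, ih, hg]
  obtain ⟨n, hn, h1⟩ := (g.eventually_isCompl_ker_pow_range_pow.and
    (Filter.eventually_ge_atTop 1)).exists
  have hle : LinearMap.range (g ^ n) ≤ N := by
    rintro _ ⟨x, rfl⟩
    obtain ⟨k, rfl⟩ : ∃ k, n = k + 1 := ⟨n - 1, by omega⟩
    rw [pow_succ', Module.End.mul_apply]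
    exact (h _).2
  let Q : FGMod R := ⟨LinearMap.range (g ^ n)⟩
  have hQ : Q.Proj := it_proj_of_retr (it_retr_of_summand (N := Q) (M := P)
    ⟨_, _, hn.symm, ⟨LinearEquiv.refl _ _⟩⟩) hP
  have hlt : itLen Q < itLen P := by
    have : LinearMap.range (g ^ n) ≠ ⊤ := by
      intro h; rw [h] at hle; exact hne (top_le_iff.1 hle)
    have := Submodule.length_lt this
    rw [← it_coe_len P, ← it_coe_len Q] at this
    exact_mod_cast this
  rw [hlen] at hlt
  refine Nat.find_min hex hlt ⟨Q, f ∘ₗ (LinearMap.range (g ^ n)).subtype, hQ, ?_, rfl⟩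
  intro m
  obtain ⟨x, rfl⟩ := hf m
  exact ⟨⟨_, x, rfl⟩, hgn n x⟩

theorem it_cover_lift {M P Q : FGMod R} {f : P →ₗ[Rᵐᵒᵖ] M} {g : Q →ₗ[Rᵐᵒᵖ] M}
    (hf : IsProjCover M P f) (hg : IsProjCover M Q g) :
    ∃ h : P →ₗ[Rᵐᵒᵖ] Q, Surjective h ∧ ∀ x, g (h x) = f x := by
  have : Module.Projective Rᵐᵒᵖ P := hf.1
  obtain ⟨h, hh⟩ := Module.projective_lifting_property g f hg.2.1
  have hh' : ∀ x, g (h x) = f x := fun x => LinearMap.congr_fun hh x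
  refine ⟨h, ?_, hh'⟩
  rw [← LinearMap.range_eq_top]
  apply hg.2.2
  rw [eq_top_iff]
  intro y _
  obtain ⟨x, hx⟩ := hf.2.1 (g y)
  have : y = h x + (y - h x) := by abel
  rw [this]
  exact Submodule.add_mem_sup ⟨_, rfl⟩ (by simp [hh', hx])

/-- Uniqueness of syzygies. -/
theorem it_syz_unique [IsArtinianRing Rᵐᵒᵖ] {M A B : FGMod R}
    (hA : IsSyzygy M A) (hB : IsSyzygy M B) : Nonempty (A ≃ₗ[Rᵐᵒᵖ] B) := by
  obtain ⟨P, f, hf, ⟨eA⟩⟩ := hA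
  obtain ⟨Q, g, hg, ⟨eB⟩⟩ := hB
  obtain ⟨h, hs, hh⟩ := it_cover_lift hf hg
  obtain ⟨k, ks, hk⟩ := it_cover_lift hg hf
  have hinj : Injective h := by
    have : Injective (k ∘ₗ h) :=
      IsNoetherian.injective_of_surjective_endomorphism _ (ks.comp hs)
    exact Function.Injective.of_comp (f := k) this
  let e := LinearEquiv.ofBijective h ⟨hinj, hs⟩
  have hmap : (LinearMap.ker f).map (e : P →ₗ[Rᵐᵒᵖ] Q) = LinearMap.ker g := by
    ext y
    constructor
    · rintro ⟨x, hx, rfl⟩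
      exact LinearMap.mem_ker.2 ((hh x).trans hx)
    · intro hy
      obtain ⟨x, rfl⟩ := hs y
      exact ⟨x, LinearMap.mem_ker.2 ((hh x).symm.trans hy), rfl⟩
  exact ⟨(eA.trans (e.ofSubmodules _ _ hmap)).trans eB.symm⟩

theorem it_exists_syz [IsArtinianRing Rᵐᵒᵖ] (M : FGMod R) : ∃ N, IsSyzygy M N := by
  obtain ⟨P, f, hf⟩ := it_exists_cover M
  exact ⟨⟨LinearMap.ker f⟩, P, f, hf, ⟨LinearEquiv.refl _ _⟩⟩

theorem it_syz_prod {M A B A' B' : FGMod R}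
    (e : M ≃ₗ[Rᵐᵒᵖ] (A × B : Type u)) (hA : IsSyzygy A A') (hB : IsSyzygy B B') :
    IsSyzygy M (A'.prod B') := by
  obtain ⟨P, f, ⟨hP, hf, hfs⟩, ⟨eA⟩⟩ := hA
  obtain ⟨Q, g, ⟨hQ, hg, hgs⟩, ⟨eB⟩⟩ := hB
  have hP' : Module.Projective Rᵐᵒᵖ P := hP
  have hQ' : Module.Projective Rᵐᵒᵖ Q := hQ
  let F : (P × Q) →ₗ[Rᵐᵒᵖ] M := e.symm.toLinearMap ∘ₗ (f.prodMap g)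
  have hF : ∀ x, F x = 0 ↔ f x.1 = 0 ∧ g x.2 = 0 := by
    intro x
    simp [F]
  refine ⟨P.prod Q, F, ⟨(inferInstance : Module.Projective Rᵐᵒᵖ (P × Q)), ?_, ?_⟩, ⟨?_⟩⟩
  · exact e.symm.surjective.comp (hf.prodMap hg)
  · intro (N : Submodule Rᵐᵒᵖ (P × Q)) hN
    have hN' : ∀ x : P × Q, ∃ y ∈ N, ∃ z : P × Q, f z.1 = 0 ∧ g z.2 = 0 ∧ y + z = x := by
      intro x
      have hx : x ∈ N ⊔ LinearMap.ker F := by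
        have : N ⊔ LinearMap.ker F = ⊤ := hN
        rw [this]; trivial
      obtain ⟨y, hy, z, hz, h⟩ := Submodule.mem_sup.1 hx
      exact ⟨y, hy, z, ((hF z).1 hz).1, ((hF z).1 hz).2, h⟩
    have g0 : ∀ q : Q, ∃ y ∈ N, ∃ z : P, f z = 0 ∧ y + (z, 0) = (0, q) := by
      let N' : Submodule Rᵐᵒᵖ (P × Q) := N ⊔ (LinearMap.ker f).map (LinearMap.inl Rᵐᵒᵖ P Q)
      have : N'.comap (LinearMap.inr Rᵐᵒᵖ P Q) = ⊤ := by
        apply hgs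
        rw [eq_top_iff]
        intro q _
        obtain ⟨y, hy, z, hz1, hz2, h⟩ := hN' (0, q)
        have hq : q = (q - z.2) + z.2 := by abel
        rw [hq]
        refine Submodule.add_mem_sup ?_ hz2
        rw [Submodule.mem_comap]
        have : LinearMap.inr Rᵐᵒᵖ P Q (q - z.2) = y + LinearMap.inl Rᵐᵒᵖ P Q z.1 := by
          have h1 : y.1 + z.1 = 0 := congrArg Prod.fst h
          have h2 : y.2 + z.2 = q := congrArg Prod.snd h
          ext
          · simp [h1]
          · simp [← h2]
        rw [this]
        exact Submodule.add_mem_sup hy ⟨_, hz1, rfl⟩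
      intro q
      have hq : q ∈ N'.comap (LinearMap.inr Rᵐᵒᵖ P Q) := this ▸ Submodule.mem_top
      obtain ⟨y, hy, _, ⟨z, hz, rfl⟩, h⟩ := Submodule.mem_sup.1 (Submodule.mem_comap.1 hq)
      exact ⟨y, hy, z, hz, h⟩
    have g1 : N.comap (LinearMap.inl Rᵐᵒᵖ P Q) = ⊤ := by
      apply hfs
      rw [eq_top_iff]
      intro p _
      obtain ⟨y, hy, z, hz1, hz2, h⟩ := hN' (p, 0)
      obtain ⟨y', hy', z', hz', h'⟩ := g0 z.2
      have hp : p = (p - (z.1 + z')) + (z.1 + z') := by abel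
      rw [hp]
      refine Submodule.add_mem_sup ?_ (by simp [hz1, hz'])
      rw [Submodule.mem_comap]
      have : LinearMap.inl Rᵐᵒᵖ P Q (p - (z.1 + z')) = y + y' := by
        have h1 : y.1 + z.1 = p := congrArg Prod.fst h
        have h2 : y.2 + z.2 = 0 := congrArg Prod.snd h
        have h3 : y'.1 + z' = 0 := congrArg Prod.fst h'
        have h4 : y'.2 + 0 = z.2 := congrArg Prod.snd h'
        rw [add_zero] at h4
        have h5 : y'.1 = - z' := eq_neg_of_add_eq_zero_left h3
        ext
        · simp only [LinearMap.inl_apply, Prod.fst_add, h5, ← h1]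
          abel
        · simp [h4, h2]
      rw [this]
      exact add_mem hy hy'
    have g2 : ∀ p : P, (p, (0 : Q)) ∈ N := by
      intro p
      have hp : p ∈ N.comap (LinearMap.inl Rᵐᵒᵖ P Q) := g1 ▸ Submodule.mem_top
      exact hp
    show N = ⊤
    rw [eq_top_iff]
    rintro ⟨p, q⟩ -
    obtain ⟨y, hy, z, hz, h⟩ := g0 q
    have := N.add_mem (N.add_mem hy (g2 z)) (g2 p)
    rw [h] at this
    simpa using this
  · let E : (LinearMap.ker f × LinearMap.ker g) ≃ₗ[Rᵐᵒᵖ] LinearMap.ker F :=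
      { toFun := fun x => ⟨(x.1.1, x.2.1), (hF _).2 ⟨x.1.2, x.2.2⟩⟩
        invFun := fun y => (⟨y.1.1, ((hF _).1 y.2).1⟩, ⟨y.1.2, ((hF _).1 y.2).2⟩)
        map_add' := fun _ _ => rfl
        map_smul' := fun _ _ => rfl
        left_inv := fun _ => rfl
        right_inv := fun _ => rfl }
    let E' : (A' × B') ≃ₗ[Rᵐᵒᵖ] (LinearMap.ker f × LinearMap.ker g) := eA.prodCongr eB
    exact E'.trans E

theorem it_syz_of_proj {P N : FGMod R} [IsArtinianRing Rᵐᵒᵖ] (hP : P.Proj)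
    (h : IsSyzygy P N) : Subsingleton N := by
  let Z : FGMod R := ⟨PUnit.{u+1}⟩
  have hZ : IsSyzygy P Z := by
    refine ⟨P, (LinearMap.id : P →ₗ[Rᵐᵒᵖ] P), ⟨hP, surjective_id, fun N hN => ?_⟩, ⟨?_⟩⟩
    · simpa using hN
    · rw [LinearMap.ker_id]
      exact
        { toFun := fun _ => 0
          invFun := fun _ => PUnit.unit
          map_add' := fun _ _ => by simp
          map_smul' := fun _ _ => by simp
          left_inv := fun _ => rfl
          right_inv := fun _ => Subsingleton.elim _ _ }
  obtain ⟨e⟩ := it_syz_unique h hZ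
  have : Subsingleton Z := (inferInstance : Subsingleton PUnit.{u+1})
  exact e.toEquiv.subsingleton

theorem it_proj_of_syz {M N : FGMod R} (h : IsSyzygy M N) (hN : Subsingleton N) : M.Proj := by
  obtain ⟨P, f, ⟨hP, hf, -⟩, ⟨e⟩⟩ := h
  have hs : Subsingleton (LinearMap.ker f) := e.symm.toEquiv.subsingleton
  have hk : LinearMap.ker f = ⊥ := Submodule.subsingleton_iff_eq_bot.1 hs
  have hP' : Module.Projective Rᵐᵒᵖ P := hP
  exact Module.Projective.of_equiv (LinearEquiv.ofBijective f ⟨LinearMap.ker_eq_bot.1 hk, hf⟩)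

/-- Length of the syzygy. -/
noncomputable def itLam [IsArtinianRing Rᵐᵒᵖ] (M : FGMod R) : ℤ :=
  itLen (it_exists_syz M).choose

theorem it_len_iso {A B : FGMod R} (e : A ≃ₗ[Rᵐᵒᵖ] B) : itLen A = itLen B := by
  rw [itLen, itLen, e.length_eq]

theorem it_lam_eq [IsArtinianRing Rᵐᵒᵖ] {M N : FGMod R} (h : IsSyzygy M N) :
    itLam M = itLen N := by
  obtain ⟨e⟩ := it_syz_unique (it_exists_syz M).choose_spec h
  rw [itLam, it_len_iso e]

theorem it_lam_add [IsArtinianRing Rᵐᵒᵖ] {M A B : FGMod R}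
    (e : M ≃ₗ[Rᵐᵒᵖ] (A × B : Type u)) : itLam M = itLam A + itLam B := by
  obtain ⟨A', hA⟩ := it_exists_syz A
  obtain ⟨B', hB⟩ := it_exists_syz B
  rw [it_lam_eq hA, it_lam_eq hB, it_lam_eq (it_syz_prod e hA hB)]
  have : (itLen (A'.prod B') : ℕ∞) = itLen A' + itLen B' := by
    rw [it_coe_len, it_coe_len, it_coe_len]
    exact Module.length_prod _ _ _
  exact_mod_cast this

theorem it_len_zero [IsArtinianRing Rᵐᵒᵖ] (N : FGMod R) : itLen N = 0 ↔ Subsingleton N := by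
  rw [← Module.length_eq_zero_iff (R := Rᵐᵒᵖ), ← it_coe_len]
  simp

theorem it_lam_zero [IsArtinianRing Rᵐᵒᵖ] (M : FGMod R) : itLam M = 0 ↔ M.Proj := by
  obtain ⟨N, hN⟩ := it_exists_syz M
  rw [it_lam_eq hN, Nat.cast_eq_zero, it_len_zero]
  exact ⟨it_proj_of_syz hN, fun h => it_syz_of_proj h hN⟩

theorem it_exists_hom [IsArtinianRing Rᵐᵒᵖ] :
    ∃ L : ITK R →+ ℤ, ∀ M : FGMod R, L (ITcls R M) = itLam M := by
  refine ⟨QuotientAddGroup.lift _ (FreeAbelianGroup.lift itLam) ?_, fun M => ?_⟩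
  · rw [AddSubgroup.closure_le]
    rintro x (⟨A, B, C, ⟨e⟩, rfl⟩ | ⟨P, hP, rfl⟩)
    · simp [it_lam_add e]
    · simpa using (it_lam_zero P).2 hP
  · exact FreeAbelianGroup.lift_apply_of _ _

theorem it_mul_apply (f g : AddMonoid.End (ITK R)) (x : ITK R) : (f * g) x = f (g x) := rfl

theorem it_syzN [IsArtinianRing Rᵐᵒᵖ] {OmK : AddMonoid.End (ITK R)} (hOm : IsSyzygyEnd R OmK)
    (i : ℕ) : ∀ M : FGMod R, ∃ L : FGMod R, (OmK ^ i) (ITcls R M) = ITcls R L ∧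
      (L.Proj → HasPdLE i M) := by
  induction i with
  | zero => exact fun M => ⟨M, rfl, id⟩
  | succ i ih =>
    intro M
    obtain ⟨N, hN⟩ := it_exists_syz M
    obtain ⟨L, hL, hp⟩ := ih N
    refine ⟨L, ?_, fun h => Or.inr ⟨N, hN, hp h⟩⟩
    rw [pow_succ, it_mul_apply, hOm M N hN, hL]

theorem it_kill [IsArtinianRing Rᵐᵒᵖ] {OmK : AddMonoid.End (ITK R)} (hOm : IsSyzygyEnd R OmK)
    (n : ℕ) : ∀ M A B : FGMod R, HasPdLE n M → Nonempty (M ≃ₗ[Rᵐᵒᵖ] (A × B : Type u)) →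
      (OmK ^ n) (ITcls R A) = 0 := by
  induction n with
  | zero =>
    rintro M A B h ⟨e⟩
    exact it_cls_proj (it_proj_of_retr (it_retr_left e) h)
  | succ n ih =>
    rintro M A B h ⟨e⟩
    rcases h with h | ⟨N, hN, h⟩
    · rw [it_cls_proj (it_proj_of_retr (it_retr_left e) h), map_zero]
    · obtain ⟨A', hA⟩ := it_exists_syz A
      obtain ⟨B', hB⟩ := it_exists_syz B
      obtain ⟨e'⟩ := it_syz_unique hN (it_syz_prod e hA hB)
      rw [pow_succ, it_mul_apply, hOm A A' hA]
      exact ih N A' B' h ⟨e'⟩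

theorem it_map_bot [IsArtinianRing Rᵐᵒᵖ] {OmK : AddMonoid.End (ITK R)}
    (hOm : IsSyzygyEnd R OmK) {M : FGMod R} {n : ℕ} (h : HasPdLE n M) (i : ℕ) (hi : n ≤ i) :
    (ITgen R M).map ((OmK ^ i : AddMonoid.End (ITK R)) : ITK R →+ ITK R) = ⊥ := by
  refine (AddSubgroup.map_eq_bot_iff _).2 ?_
  rw [ITgen, AddSubgroup.closure_le]
  rintro x ⟨N, ⟨A, B, hAB, ⟨e⟩⟩, -, -, rfl⟩
  have h1 : (OmK ^ n) (ITcls R N) = 0 := by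
    let A' : FGMod R := ⟨A⟩
    let B' : FGMod R := ⟨B⟩
    rw [it_cls_iso (B := A') e]
    exact it_kill hOm n M A' B' h ⟨(Submodule.prodEquivOfIsCompl A B hAB).symm⟩
  show (OmK ^ i) (ITcls R N) = 0
  obtain ⟨k, rfl⟩ := Nat.exists_eq_add_of_le' hi
  rw [pow_add, it_mul_apply, h1, map_zero]

theorem it_rk_bot : rkIT R (⊥ : AddSubgroup (ITK R)) = 0 := by
  have : Subsingleton (AddSubgroup.toIntSubmodule (⊥ : AddSubgroup (ITK R))) :=
    (inferInstance : Subsingleton (⊥ : AddSubgroup (ITK R)))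
  exact Module.finrank_zero_of_subsingleton

theorem it_pd_of_rk_zero [IsArtinianRing Rᵐᵒᵖ] {OmK : AddMonoid.End (ITK R)}
    (hOm : IsSyzygyEnd R OmK) {M : FGMod R} {i : ℕ}
    (h : rkIT R ((ITgen R M).map ((OmK ^ i : AddMonoid.End (ITK R)) : ITK R →+ ITK R)) = 0) :
    HasPdLE i M := by
  obtain ⟨hfin, hmem⟩ := it_finite _ M rfl
  set H := (ITgen R M).map ((OmK ^ i : AddMonoid.End (ITK R)) : ITK R →+ ITK R) with hH
  have hfg : Module.Finite ℤ (AddSubgroup.toIntSubmodule H) := by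
    rw [Module.Finite.iff_fg, Submodule.fg_iff_addSubgroup_fg]
    show H.FG
    refine (AddSubgroup.fg_iff _).2 ⟨_, (AddMonoidHom.map_closure _ _).symm, Set.Finite.image _ (hfin.subset ?_)⟩
    rintro x ⟨N, h1, h2, -, h3⟩
    exact ⟨N, it_retr_of_summand h1, h2, h3⟩
  obtain ⟨L, hL, hp⟩ := it_syzN hOm i M
  apply hp
  have hLmem : ITcls R L ∈ H := ⟨_, hmem, hL⟩
  obtain ⟨a, ha, hz⟩ := Module.finrank_eq_zero_iff.1 h ⟨ITcls R L, hLmem⟩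
  have hz' : a • ITcls R L = 0 := congrArg Subtype.val hz
  obtain ⟨lam, hlam⟩ := it_exists_hom (R := R)
  have := congrArg lam hz'
  rw [map_zsmul, map_zero, hlam, smul_eq_mul] at this
  rw [← it_lam_zero]
  exact (mul_eq_zero.1 this).resolve_left ha

end ITHelpers

/-- If `R` is right artinian and `M` is a f.g. right `R`-module of
finite projective dimension, then `φ(M) = pd M`. -/
theorem phi_eq_pd_of_finPd (R : Type u) [Ring R] [IsArtinianRing Rᵐᵒᵖ]
    (OmK : AddMonoid.End (ITK R)) (hOm : IsSyzygyEnd R OmK)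
    (M : FGMod R) (hM : FinPd M) :
    phiIT R OmK M = pdIT M := by
  have hd : HasPdLE (pdIT M) M := Nat.sInf_mem (s := {n | HasPdLE n M}) hM
  have hbot := fun i hi => it_map_bot hOm hd i hi
  apply le_antisymm
  · apply Nat.sInf_le
    intro i hi
    rw [hbot i hi, hbot _ le_rfl]
  · apply le_csInf
    · refine ⟨pdIT M, fun i hi => ?_⟩
      rw [hbot i hi, hbot _ le_rfl]
    · intro n hn
      by_contra hlt
      have h1 := hn (pdIT M) (by omega)
      rw [hbot _ le_rfl, it_rk_bot] at h1
      exact hlt (Nat.sInf_le (it_pd_of_rk_zero hOm h1.symm))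
end

section
/- Let R be a right artinian ring and M, N finitely generated right R-modules. Then φ(N ⊕ M) ≥ φ(M). -/
open Module Function

universe u

variable (R : Type u) [Ring R]

variable {R}

variable (R)

/-- `X` is a retract of `M`. -/
def RetrIT {R : Type u} [Ring R] (X M : FGMod R) : Prop :=
  ∃ (i : X →ₗ[Rᵐᵒᵖ] M) (p : M →ₗ[Rᵐᵒᵖ] X), ∀ x, p (i x) = x

theorem isSummand_iff_retr {R : Type u} [Ring R] (X M : FGMod R) :
    X.IsSummand M ↔ RetrIT X M := by
  constructor
  · rintro ⟨A, B, h, ⟨e⟩⟩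
    refine ⟨A.subtype ∘ₗ e.toLinearMap, e.symm.toLinearMap ∘ₗ A.projectionOnto B h, fun x => ?_⟩
    simp
  · rintro ⟨i, p, h⟩
    have hinj : Function.Injective i := Function.LeftInverse.injective h
    let e := LinearEquiv.ofInjective i hinj
    refine ⟨LinearMap.range i, LinearMap.ker (e.toLinearMap ∘ₗ p), ?_, ⟨e⟩⟩
    apply LinearMap.isCompl_of_proj
    rintro ⟨_, x, rfl⟩
    apply Subtype.ext
    simp [e, h]

theorem ITcls_prod {R : Type u} [Ring R] (A B C : FGMod R)
    (e : A ≃ₗ[Rᵐᵒᵖ] (B × C : Type u)) : ITcls R A = ITcls R B + ITcls R C := by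
  have h : FreeAbelianGroup.of A - FreeAbelianGroup.of B - FreeAbelianGroup.of C
      ∈ AddSubgroup.closure (ITRel R) :=
    AddSubgroup.subset_closure (Or.inl ⟨A, B, C, ⟨e⟩, rfl⟩)
  have h2 := (QuotientAddGroup.eq_zero_iff _).2 h
  have h3 : ITcls R A - ITcls R B - ITcls R C = 0 := h2
  rw [sub_sub, sub_eq_zero] at h3
  exact h3

theorem ITcls_iso {R : Type u} [Ring R] (A B : FGMod R)
    (e : A ≃ₗ[Rᵐᵒᵖ] B) : ITcls R A = ITcls R B := by
  let Z : FGMod R := ⟨PUnit.{u+1}⟩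
  have hZ : ITcls R Z = 0 := by
    have hp : Z.Proj := by
      unfold FGMod.Proj
      change Module.Projective Rᵐᵒᵖ PUnit.{u+1}
      infer_instance
    exact (QuotientAddGroup.eq_zero_iff _).2
      (AddSubgroup.subset_closure (Or.inr ⟨Z, hp, rfl⟩))
  have e2 : A ≃ₗ[Rᵐᵒᵖ] (B × Z : Type u) :=
    e.trans (LinearEquiv.prodUnique (R := Rᵐᵒᵖ) (M := B) (M₂ := PUnit.{u+1})).symm
  rw [ITcls_prod A B Z e2, hZ, add_zero]

/-- Fitting: an endomorphism of an indecomposable finite length module is nilpotent or a unit. -/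
theorem fitting_indec {R : Type u} [Ring R] [IsArtinianRing Rᵐᵒᵖ] (X : FGMod R) (hX : X.Indec)
    (f : Module.End Rᵐᵒᵖ X) : IsNilpotent f ∨ IsUnit f := by
  obtain ⟨k, hk⟩ := Filter.eventually_atTop.mp f.eventually_isCompl_ker_pow_range_pow
  have h1 := hk (k+1) (by omega)
  rcases hX.2 _ _ h1 with h | h
  · right
    rw [Module.End.isUnit_iff]
    apply IsArtinian.bijective_of_injective_endomorphism
    rw [← LinearMap.ker_eq_bot, eq_bot_iff, ← h]
    intro x hx
    rw [LinearMap.mem_ker] at hx ⊢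
    rw [pow_succ, Module.End.mul_apply, hx, map_zero]
  · left
    exact ⟨k+1, LinearMap.range_eq_bot.1 h⟩

theorem retr_of_isUnit {R : Type u} [Ring R] (X A : FGMod R) (i : X →ₗ[Rᵐᵒᵖ] A)
    (p : A →ₗ[Rᵐᵒᵖ] X) (h : IsUnit (p ∘ₗ i : Module.End Rᵐᵒᵖ X)) : RetrIT X A := by
  obtain ⟨v, hv⟩ := h
  refine ⟨i, (v⁻¹).1 ∘ₗ p, fun x => ?_⟩
  have h2 : (v⁻¹).1 * v.1 = 1 := v.inv_mul
  rw [hv] at h2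
  exact LinearMap.congr_fun h2 x

theorem retr_prod {R : Type u} [Ring R] [IsArtinianRing Rᵐᵒᵖ] (X M A B : FGMod R) (hX : X.Indec)
    (e : M ≃ₗ[Rᵐᵒᵖ] (A × B : Type u)) (h : RetrIT X M) : RetrIT X A ∨ RetrIT X B := by
  obtain ⟨i, p, hip⟩ := h
  let iA : X →ₗ[Rᵐᵒᵖ] A := LinearMap.fst Rᵐᵒᵖ A B ∘ₗ e.toLinearMap ∘ₗ i
  let iB : X →ₗ[Rᵐᵒᵖ] B := LinearMap.snd Rᵐᵒᵖ A B ∘ₗ e.toLinearMap ∘ₗ i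
  let pA : A →ₗ[Rᵐᵒᵖ] X := p ∘ₗ e.symm.toLinearMap ∘ₗ LinearMap.inl Rᵐᵒᵖ A B
  let pB : B →ₗ[Rᵐᵒᵖ] X := p ∘ₗ e.symm.toLinearMap ∘ₗ LinearMap.inr Rᵐᵒᵖ A B
  have hs : (pB ∘ₗ iB : Module.End Rᵐᵒᵖ X) = 1 - (pA ∘ₗ iA : Module.End Rᵐᵒᵖ X) := by
    rw [eq_sub_iff_add_eq']
    ext x
    simp only [pA, pB, iA, iB, LinearMap.add_apply, LinearMap.comp_apply, Module.End.one_apply,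
      LinearEquiv.coe_coe, LinearMap.inl_apply, LinearMap.inr_apply, LinearMap.fst_apply,
      LinearMap.snd_apply]
    rw [← map_add, ← map_add]
    simp [hip]
  rcases fitting_indec X hX (pA ∘ₗ iA) with h | h
  · right
    apply retr_of_isUnit X B iB pB
    rw [hs]
    exact h.isUnit_one_sub
  · left
    exact retr_of_isUnit X A iA pA h

theorem retr_indec {R : Type u} [Ring R] (X M : FGMod R) (hX : Nontrivial X) (hM : M.Indec)
    (h : RetrIT X M) : Nonempty (X ≃ₗ[Rᵐᵒᵖ] M) := by
  obtain ⟨i, p, hip⟩ := h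
  have hidem : IsIdempotentElem (i ∘ₗ p : Module.End Rᵐᵒᵖ M) := by
    ext x
    simp [hip]
  have hc := LinearMap.IsIdempotentElem.isCompl hidem
  rcases hM.2 _ _ hc with h0 | h0
  · exfalso
    rw [LinearMap.range_eq_bot] at h0
    obtain ⟨x, hx⟩ := exists_ne (0 : X)
    apply hx
    have h1 := LinearMap.congr_fun h0 (i x)
    simp only [LinearMap.comp_apply, hip, LinearMap.zero_apply] at h1
    rw [← hip x, h1, map_zero]
  · have hpi : Function.Injective p := by
      rw [← LinearMap.ker_eq_bot, eq_bot_iff, ← h0]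
      intro x hx
      rw [LinearMap.mem_ker] at hx ⊢
      simp [hx]
    exact ⟨(LinearEquiv.ofBijective p ⟨hpi, fun x => ⟨i x, hip x⟩⟩).symm⟩

theorem finite_classes {R : Type u} [Ring R] [IsArtinianRing Rᵐᵒᵖ] (n : ℕ) :
    ∀ M : FGMod R, Module.length Rᵐᵒᵖ M ≤ n →
      ({x | ∃ X : FGMod R, RetrIT X M ∧ X.Indec ∧ x = ITcls R X}).Finite := by
  induction n with
  | zero =>
    intro M hM
    have hM0 : Subsingleton M := Module.length_eq_zero_iff.1 (le_antisymm (by simpa using hM) bot_le)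
    convert Set.finite_empty
    rw [Set.eq_empty_iff_forall_notMem]
    rintro x ⟨X, ⟨i, p, hip⟩, hX, -⟩
    have := hX.1
    obtain ⟨a, b, hab⟩ := exists_pair_ne X
    apply hab
    rw [← hip a, ← hip b, Subsingleton.elim (i a) (i b)]
  | succ n ih =>
    intro M hM
    by_cases hI : M.Indec
    · refine (Set.finite_singleton (ITcls R M)).subset ?_
      rintro x ⟨X, hXM, hX, rfl⟩
      obtain ⟨e⟩ := retr_indec X M hX.1 hI hXM
      exact ITcls_iso X M e
    · by_cases hn : Nontrivial M
      · have : ∃ A B : Submodule Rᵐᵒᵖ M, IsCompl A B ∧ A ≠ ⊥ ∧ B ≠ ⊥ := by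
          by_contra hcon
          apply hI
          refine ⟨hn, fun A B hAB => ?_⟩
          by_contra h
          push Not at h
          exact hcon ⟨A, B, hAB, h⟩
        obtain ⟨A, B, hAB, hA, hB⟩ := this
        have hlt : ∀ C : Submodule Rᵐᵒᵖ M, C ≠ ⊤ → Module.length Rᵐᵒᵖ C ≤ n := by
          intro C hC
          have := (Submodule.length_lt hC).trans_le hM
          push_cast at this
          exact Order.le_of_lt_add_one this
        have hA' : A ≠ ⊤ := by
          rintro rfl
          exact hB (by simpa using hAB.disjoint)
        have hB' : B ≠ ⊤ := by
          rintro rfl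
          exact hA (by simpa using hAB.disjoint)
        refine ((ih ⟨A⟩ (hlt A hA')).union (ih ⟨B⟩ (hlt B hB'))).subset ?_
        rintro x ⟨X, hXM, hX, rfl⟩
        rcases retr_prod X M ⟨A⟩ ⟨B⟩ hX (A.prodEquivOfIsCompl B hAB).symm hXM with h | h
        · exact Or.inl ⟨X, h, hX, rfl⟩
        · exact Or.inr ⟨X, h, hX, rfl⟩
      · rw [not_nontrivial_iff_subsingleton] at hn
        apply ih M
        rw [Module.length_eq_zero_iff.2 hn]
        exact bot_le

theorem ITgen_fg {R : Type u} [Ring R] [IsArtinianRing Rᵐᵒᵖ] (M : FGMod R) :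
    (AddSubgroup.toIntSubmodule (ITgen R M)).FG := by
  have hl : Module.length Rᵐᵒᵖ M ≠ ⊤ := Module.length_ne_top
  obtain ⟨n, hn⟩ := ENat.ne_top_iff_exists.1 hl
  have hf := finite_classes n M hn.ge
  have hf2 : ({x | ∃ N : FGMod R, N.IsSummand M ∧ N.Indec ∧ ¬N.Proj ∧ x = ITcls R N}).Finite := by
    refine hf.subset ?_
    rintro x ⟨X, h1, h2, -, h3⟩
    exact ⟨X, (isSummand_iff_retr X M).1 h1, h2, h3⟩
  rw [Submodule.fg_iff_addSubgroup_fg]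
  exact (AddSubgroup.fg_iff _).2 ⟨_, rfl, hf2⟩

theorem ITgen_le_prod {R : Type u} [Ring R] (M N : FGMod R) :
    ITgen R M ≤ ITgen R (N.prod M) := by
  apply AddSubgroup.closure_mono
  rintro x ⟨X, h1, h2, h3, h4⟩
  refine ⟨X, ?_, h2, h3, h4⟩
  rw [isSummand_iff_retr] at h1 ⊢
  obtain ⟨i, p, h⟩ := h1
  exact ⟨LinearMap.inr Rᵐᵒᵖ N M ∘ₗ i, p ∘ₗ LinearMap.snd Rᵐᵒᵖ N M, h⟩

/-- Rank drop of a map on a finitely generated subgroup, in terms of the kernel. -/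
theorem rank_ker {K : Type*} [AddCommGroup K] (g : K →ₗ[ℤ] K) (A : Submodule ℤ K) (hA : A.FG) :
    Module.finrank ℤ (A.map g) + Module.finrank ℤ (LinearMap.ker (g.domRestrict A))
      = Module.finrank ℤ A := by
  have : Module.Finite ℤ A := Module.Finite.iff_fg.2 hA
  have h := Submodule.finrank_quotient_add_finrank (LinearMap.ker (g.domRestrict A))
  rwa [(g.domRestrict A).quotKerEquivRange.finrank_eq, LinearMap.range_domRestrict] at h

theorem rank_stable {K : Type*} [AddCommGroup K] (g : K →ₗ[ℤ] K) (A B : Submodule ℤ K)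
    (hA : A.FG) (hBA : B ≤ A) (h : Module.finrank ℤ (A.map g) = Module.finrank ℤ A) :
    Module.finrank ℤ (B.map g) = Module.finrank ℤ B := by
  have fA : Module.Finite ℤ A := Module.Finite.iff_fg.2 hA
  have nA : IsNoetherian ℤ A := isNoetherian_of_isNoetherianRing_of_finite ℤ A
  have hB : B.FG := by
    have : (B.submoduleOf A).FG := IsNoetherian.noetherian _
    have := this.map A.subtype
    rwa [Submodule.submoduleOf, Submodule.map_comap_subtype, inf_eq_right.2 hBA] at this
  have h1 := rank_ker g A hA
  have h2 := rank_ker g B hB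
  let j : LinearMap.ker (g.domRestrict B) →ₗ[ℤ] LinearMap.ker (g.domRestrict A) :=
    (Submodule.inclusion hBA).restrict (fun x hx => by simpa using hx)
  have hj : Function.Injective j := by
    intro x y hxy
    apply Subtype.ext
    apply Submodule.inclusion_injective hBA
    exact congrArg Subtype.val hxy
  have := LinearMap.finrank_le_finrank_of_injective hj
  omega

/-- `φ(N ⊕ M) ≥ φ(M)`. -/
theorem phi_le_phi_prod (R : Type u) [Ring R] [IsArtinianRing Rᵐᵒᵖ]
    (OmK : AddMonoid.End (ITK R)) (hOm : IsSyzygyEnd R OmK)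
    (M N : FGMod R) :
    phiIT R OmK M ≤ phiIT R OmK (N.prod M) := by
  -- translation to `ℤ`-submodules
  have hrk : ∀ (H : AddSubgroup (ITK R)) (n : ℕ),
      rkIT R (H.map ((OmK ^ n : AddMonoid.End (ITK R)) : ITK R →+ ITK R)) =
      Module.finrank ℤ ((AddSubgroup.toIntSubmodule H).map
        ((OmK ^ n : AddMonoid.End (ITK R)) : ITK R →+ ITK R).toIntLinearMap) := fun H n => rfl
  have hmap : ∀ (H : AddSubgroup (ITK R)) (n i : ℕ), n ≤ i →
      (AddSubgroup.toIntSubmodule H).map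
        ((OmK ^ i : AddMonoid.End (ITK R)) : ITK R →+ ITK R).toIntLinearMap =
      ((AddSubgroup.toIntSubmodule H).map
        ((OmK ^ n : AddMonoid.End (ITK R)) : ITK R →+ ITK R).toIntLinearMap).map
        ((OmK ^ (i - n) : AddMonoid.End (ITK R)) : ITK R →+ ITK R).toIntLinearMap := by
    intro H n i hni
    rw [← Submodule.map_comp]
    congr 1
    ext x
    have : OmK ^ i = OmK ^ (i - n) * OmK ^ n := by rw [← pow_add]; congr 1; omega
    rw [this]
    rfl
  have hfg := fun n : ℕ => (ITgen_fg (N.prod M)).map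
    ((OmK ^ n : AddMonoid.End (ITK R)) : ITK R →+ ITK R).toIntLinearMap
  have hne : {n | ∀ i, n ≤ i →
    rkIT R ((ITgen R (N.prod M)).map ((OmK ^ i : AddMonoid.End (ITK R)) : ITK R →+ ITK R))
      = rkIT R ((ITgen R (N.prod M)).map
        ((OmK ^ n : AddMonoid.End (ITK R)) : ITK R →+ ITK R))}.Nonempty := by
    have hanti : Antitone (fun n : ℕ => rkIT R ((ITgen R (N.prod M)).map
        ((OmK ^ n : AddMonoid.End (ITK R)) : ITK R →+ ITK R))) := by
      intro n i hni
      simp only [hrk]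
      rw [hmap _ n i hni]
      have := rank_ker ((OmK ^ (i - n) : AddMonoid.End (ITK R)) : ITK R →+ ITK R).toIntLinearMap
        _ (hfg n)
      omega
    obtain ⟨n, hn⟩ := WellFoundedLT.antitone_chain_condition hanti
    exact ⟨n, fun i hi => (hn i hi).symm⟩
  have hmem := Nat.sInf_mem hne
  apply Nat.sInf_le
  intro i hi
  have h := hmem i hi
  simp only [hrk] at h ⊢
  change phiIT R OmK (N.prod M) ≤ i at hi
  change Module.finrank ℤ ((AddSubgroup.toIntSubmodule (ITgen R (N.prod M))).map _) =
    Module.finrank ℤ ((AddSubgroup.toIntSubmodule (ITgen R (N.prod M))).map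
     ((OmK ^ (phiIT R OmK (N.prod M)) : AddMonoid.End (ITK R)) : ITK R →+ ITK R).toIntLinearMap) at h
  rw [hmap _ _ i hi] at h ⊢
  exact rank_stable _ _ _ (hfg _) (Submodule.map_mono (ITgen_le_prod M N)) h
end

section
/- Let R be a right artinian ring and M a finitely generated right R-module of finite projective dimension. Then ψ(M) = pd M, where ψ is the second Igusa–Todorov function. -/
open Module Function

universe u

variable (R : Type u) [Ring R]

variable {R}

variable (R)

open CategoryTheory in
/-- Categorical projective dimension bound. -/
abbrev CPd {S : Type u} [Ring S] (n : ℕ) (M : FGMod S) : Prop :=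
  HasProjectiveDimensionLT (ModuleCat.of Sᵐᵒᵖ M) (n + 1)

open CategoryTheory in
theorem cpd_zero_iff {S : Type u} [Ring S] (M : FGMod S) : CPd 0 M ↔ M.Proj := by
  unfold CPd FGMod.Proj
  rw [IsProjective.iff_projective, projective_iff_hasProjectiveDimensionLT_one]

open CategoryTheory in
theorem cpd_of_iso {S : Type u} [Ring S] {M N : FGMod S} (n : ℕ)
    (e : M ≃ₗ[Sᵐᵒᵖ] N) (h : CPd n M) : CPd n N := by
  have : HasProjectiveDimensionLT (ModuleCat.of Sᵐᵒᵖ M) (n + 1) := h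
  exact hasProjectiveDimensionLT_of_iso e.toModuleIso (n + 1)

open CategoryTheory in
theorem cpd_syzygy {S : Type u} [Ring S] {M N : FGMod S} (n : ℕ) (h : IsSyzygy M N) :
    CPd (n + 1) M ↔ CPd n N := by
  obtain ⟨P, f, ⟨hP, hf, -⟩, ⟨e⟩⟩ := h
  have hS := LinearMap.shortExact_shortComplexKer hf
  have hP' : Projective (ModuleCat.of Sᵐᵒᵖ P) := (IsProjective.iff_projective P).1 hP
  have := hS.hasProjectiveDimensionLT_X₃_iff n hP'
  refine this.trans ⟨fun _ => ?_, fun h => ?_⟩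
  · exact hasProjectiveDimensionLT_of_iso (X := ModuleCat.of Sᵐᵒᵖ (LinearMap.ker f))
      e.symm.toModuleIso (n + 1)
  · have : HasProjectiveDimensionLT (ModuleCat.of Sᵐᵒᵖ N) (n + 1) := h
    exact hasProjectiveDimensionLT_of_iso (X' := ModuleCat.of Sᵐᵒᵖ (LinearMap.ker f))
      e.toModuleIso (n + 1)

open CategoryTheory in
theorem cpd_summand {S : Type u} [Ring S] {X N : FGMod S} (n : ℕ) (h : X.IsSummand N)
    (hN : CPd n N) : CPd n X := by
  obtain ⟨A, B, hAB, ⟨e⟩⟩ := h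
  have : HasProjectiveDimensionLT (ModuleCat.of Sᵐᵒᵖ N) (n + 1) := hN
  let r : Retract (ModuleCat.of Sᵐᵒᵖ X) (ModuleCat.of Sᵐᵒᵖ N) :=
    { i := ModuleCat.ofHom (A.subtype ∘ₗ e.toLinearMap)
      r := ModuleCat.ofHom (e.symm.toLinearMap ∘ₗ A.projectionOnto B hAB)
      retract := by
        ext x
        simp }
  exact r.hasProjectiveDimensionLT (n + 1)

theorem cpd_mono {S : Type u} [Ring S] {M : FGMod S} {m n : ℕ} (h : m ≤ n) (hM : CPd m M) :
    CPd n M :=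
  have : CategoryTheory.HasProjectiveDimensionLT (ModuleCat.of Sᵐᵒᵖ M) (m + 1) := hM
  CategoryTheory.hasProjectiveDimensionLT_of_ge _ (m + 1) (n + 1) (by omega)

/-- Existence of projective covers of finitely generated modules. -/
theorem exists_syzygy {S : Type u} [Ring S] [IsArtinianRing Sᵐᵒᵖ] (M : FGMod S) :
    ∃ N, IsSyzygy M N := by
  obtain ⟨k, f, hf⟩ := Module.Finite.exists_fin' Sᵐᵒᵖ M
  let P := Fin k → Sᵐᵒᵖ
  obtain ⟨P', hP'⟩ : ∃ P' : Submodule Sᵐᵒᵖ P,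
      Minimal (fun Q : Submodule Sᵐᵒᵖ P => Q.map f = ⊤) P' := by
    apply exists_minimal_of_wellFoundedLT
    exact ⟨⊤, by rw [Submodule.map_top, LinearMap.range_eq_top.2 hf]⟩
  have hmap : P'.map f = ⊤ := hP'.prop
  have hfs : Surjective (f ∘ₗ P'.subtype) := by
    rw [← LinearMap.range_eq_top, LinearMap.range_comp, Submodule.range_subtype, hmap]
  obtain ⟨g, hg⟩ := Module.projective_lifting_property (f ∘ₗ P'.subtype) f hfs
  have hmin : ∀ Q : Submodule Sᵐᵒᵖ P', Q.map (f ∘ₗ P'.subtype) = ⊤ → Q = ⊤ := by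
    intro Q hQ
    have h1 : P' ≤ Q.map P'.subtype := by
      apply hP'.le_of_le
      · rw [← Submodule.map_comp, hQ]
      · exact Submodule.map_subtype_le _ _
    rw [eq_top_iff]
    rintro ⟨x, hx⟩ -
    obtain ⟨y, hy, hyx⟩ := h1 hx
    have : y = ⟨x, hx⟩ := Subtype.ext hyx
    exact this ▸ hy
  have hgs : Surjective (g ∘ₗ P'.subtype) := by
    rw [← LinearMap.range_eq_top]
    apply hmin
    rw [LinearMap.range_eq_map, ← Submodule.map_comp, ← LinearMap.comp_assoc, hg,
      ← LinearMap.range_eq_map, LinearMap.range_eq_top]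
    exact hfs
  have hgi : Injective (g ∘ₗ P'.subtype) :=
    IsNoetherian.injective_of_surjective_endomorphism _ hgs
  let e := LinearEquiv.ofBijective _ ⟨hgi, hgs⟩
  have hproj : Module.Projective Sᵐᵒᵖ P' := by
    refine Module.Projective.of_split P'.subtype (e.symm.toLinearMap ∘ₗ g) ?_
    refine LinearMap.ext fun x => Subtype.ext ?_
    have : e.symm (e x) = x := e.symm_apply_apply x
    exact congrArg Subtype.val this
  let F : P' →ₗ[Sᵐᵒᵖ] M := f ∘ₗ P'.subtype
  refine ⟨⟨LinearMap.ker F⟩, ⟨P'⟩, F, ⟨hproj, hfs, ?_⟩, ⟨LinearEquiv.refl _ _⟩⟩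
  intro Q hQ
  apply hmin
  have h2 := congrArg (Submodule.map F) hQ
  rw [Submodule.map_sup, Submodule.map_top, LinearMap.range_eq_top.2 hfs] at h2
  rw [eq_top_iff, ← h2]
  refine sup_le le_rfl ?_
  rintro _ ⟨y, hy, rfl⟩
  rw [LinearMap.mem_ker.1 hy]
  exact Submodule.zero_mem _

theorem hasPdLE_iff {S : Type u} [Ring S] [IsArtinianRing Sᵐᵒᵖ] (n : ℕ) (M : FGMod S) :
    HasPdLE n M ↔ CPd n M := by
  induction n generalizing M with
  | zero => exact (cpd_zero_iff M).symm
  | succ n ih =>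
    constructor
    · rintro (h | ⟨N, hN, h⟩)
      · exact cpd_mono (Nat.zero_le _) ((cpd_zero_iff M).2 h)
      · exact (cpd_syzygy n hN).2 ((ih N).1 h)
    · intro h
      obtain ⟨N, hN⟩ := exists_syzygy M
      exact Or.inr ⟨N, hN, (ih N).2 ((cpd_syzygy n hN).1 h)⟩

theorem exists_syzygyN {S : Type u} [Ring S] [IsArtinianRing Sᵐᵒᵖ] (k : ℕ) (M : FGMod S) :
    ∃ N, IsSyzygyN k M N := by
  induction k generalizing M with
  | zero => exact ⟨M, ⟨LinearEquiv.refl _ _⟩⟩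
  | succ k ih =>
    obtain ⟨L, hL⟩ := exists_syzygy M
    obtain ⟨N, hN⟩ := ih L
    exact ⟨N, L, hL, hN⟩

theorem cpd_syzygyN {S : Type u} [Ring S] (k n : ℕ) (M N : FGMod S)
    (h : IsSyzygyN k M N) : CPd (n + k) M ↔ CPd n N := by
  induction k generalizing M with
  | zero =>
    obtain ⟨e⟩ := h
    exact ⟨cpd_of_iso n e, cpd_of_iso n e.symm⟩
  | succ k ih =>
    obtain ⟨L, hL, hN⟩ := h
    exact (cpd_syzygy (n + k) hL).trans (ih L hN)

theorem itcls_proj {S : Type u} [Ring S] (P : FGMod S) (h : P.Proj) : ITcls S P = 0 :=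
  (QuotientAddGroup.eq_zero_iff _).2 (AddSubgroup.subset_closure (Or.inr ⟨P, h, rfl⟩))

theorem omk_pow_eq_zero {S : Type u} [Ring S] (OmK : AddMonoid.End (ITK S))
    (hOm : IsSyzygyEnd S OmK) (n : ℕ) (M : FGMod S) (h : HasPdLE n M) :
    (OmK ^ n) (ITcls S M) = 0 := by
  induction n generalizing M with
  | zero => rw [itcls_proj M h, map_zero]
  | succ n ih =>
    rcases h with h | ⟨N, hN, h⟩
    · rw [itcls_proj M h, map_zero]
    · rw [pow_succ]
      change (OmK ^ n) (OmK (ITcls S M)) = 0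
      rw [hOm M N hN, ih N h]

theorem rk_map_zero {S : Type u} [Ring S] [IsArtinianRing Sᵐᵒᵖ] (OmK : AddMonoid.End (ITK S))
    (hOm : IsSyzygyEnd S OmK) (n : ℕ) (M : FGMod S) (h : CPd n M) :
    rkIT S ((ITgen S M).map ((OmK ^ n : AddMonoid.End (ITK S)) : ITK S →+ ITK S)) = 0 := by
  have h0 : (ITgen S M).map ((OmK ^ n : AddMonoid.End (ITK S)) : ITK S →+ ITK S) = ⊥ := by
    refine (AddSubgroup.map_eq_bot_iff _).2 ?_
    unfold ITgen
    rw [AddSubgroup.closure_le]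
    rintro _ ⟨N, hN, -, -, rfl⟩
    exact omk_pow_eq_zero OmK hOm n N ((hasPdLE_iff n N).2 (cpd_summand n hN h))
  rw [h0, rkIT]
  have : Subsingleton (AddSubgroup.toIntSubmodule (⊥ : AddSubgroup (ITK S))) :=
    inferInstanceAs (Subsingleton (⊥ : AddSubgroup (ITK S)))
  exact Module.finrank_zero_of_subsingleton

/-- If `M` has finite projective dimension then `ψ(M) = pd M`. -/
theorem psi_eq_pd_of_finPd (R : Type u) [Ring R] [IsArtinianRing Rᵐᵒᵖ]
    (OmK : AddMonoid.End (ITK R)) (hOm : IsSyzygyEnd R OmK)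
    (M : FGMod R) (hM : FinPd M) :
    psiIT R OmK M = pdIT M := by
  have hd : CPd (pdIT M) M := (hasPdLE_iff _ _).1 (Nat.sInf_mem hM)
  have hphi : phiIT R OmK M ≤ pdIT M := by
    refine Nat.sInf_le fun i hi => ?_
    rw [rk_map_zero OmK hOm i M (cpd_mono hi hd), rk_map_zero OmK hOm _ M hd]
  unfold psiIT
  generalize phiIT R OmK M = k at hphi ⊢
  obtain ⟨m, hm⟩ := Nat.exists_eq_add_of_le hphi
  have hle : ∀ N, IsSyzygyN k M N → CPd m N := fun N hN =>
    (cpd_syzygyN k m M N hN).1 (by rw [hm, add_comm] at hd; exact hd)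
  suffices IsGreatest {d | ∃ N X : FGMod R, IsSyzygyN k M N ∧
      X.IsSummand N ∧ FinPd X ∧ d = pdIT X} m by
    rw [this.csSup_eq, hm]
  constructor
  · obtain ⟨N, hN⟩ := exists_syzygyN k M
    have hfin : FinPd N := ⟨m, (hasPdLE_iff _ _).2 (hle N hN)⟩
    refine ⟨N, N, hN, ⟨⊤, ⊥, isCompl_top_bot, ⟨Submodule.topEquiv.symm⟩⟩, hfin, ?_⟩
    apply le_antisymm
    · have h1 : CPd (pdIT N) N := (hasPdLE_iff _ _).1 (Nat.sInf_mem hfin)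
      have h2 : pdIT M ≤ pdIT N + k :=
        Nat.sInf_le ((hasPdLE_iff _ _).2 ((cpd_syzygyN k _ M N hN).2 h1))
      omega
    · exact Nat.sInf_le ((hasPdLE_iff _ _).2 (hle N hN))
  · rintro _ ⟨N, X, hN, hX, -, rfl⟩
    exact Nat.sInf_le ((hasPdLE_iff _ _).2 (cpd_summand m hX (hle N hN)))
end

section
/- Let R be a right artinian ring and 0 → A → B → C → 0 a short exact sequence of finitely generated right R-modules with pd C finite. Then ψ(C) ≤ ψ(A ⊕ B) + 1. -/
open Module Function

universe u

variable (R : Type u) [Ring R]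

variable {R}

variable (R)

namespace ITAux
section gen
variable {S : Type*} [Ring S] {X M N : Type*} [AddCommGroup X] [Module S X]
  [AddCommGroup M] [Module S M] [AddCommGroup N] [Module S N]

lemma fitting_unit [IsArtinian S X] [IsNoetherian S X]
    (hX : ∀ A B : Submodule S X, IsCompl A B → A = ⊥ ∨ B = ⊥) (h : Module.End S X) :
    IsUnit h ∨ IsUnit (1 - h) := by
  obtain ⟨n, hn⟩ := Filter.eventually_atTop.1 (LinearMap.eventually_isCompl_ker_pow_range_pow h)
  have h1 := hn (n + 1) (by omega)
  rcases hX _ _ h1 with h0 | h0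
  · left
    rw [Module.End.isUnit_iff]
    have hk : LinearMap.range (h ^ (n + 1)) = ⊤ := by
      have := h1.sup_eq_top
      rwa [h0, bot_sup_eq] at this
    constructor
    · have : Function.Injective (h ^ (n + 1)) := LinearMap.ker_eq_bot.1 h0
      rw [pow_succ] at this
      exact Function.Injective.of_comp (f := (h ^ n)) this
    · have : Function.Surjective (h ^ (n + 1)) := LinearMap.range_eq_top.1 hk
      rw [pow_succ'] at this
      exact Function.Surjective.of_comp (g := (h ^ n)) this
  · right
    apply IsNilpotent.isUnit_one_sub
    exact ⟨n + 1, LinearMap.range_eq_bot.1 h0⟩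

lemma schur (e : (X × M) ≃ₗ[S] (X × N))
    (ha : Function.Bijective (fun x : X => (e (x, 0)).1)) : Nonempty (M ≃ₗ[S] N) := by
  let a : X →ₗ[S] X := (LinearMap.fst S X N) ∘ₗ e.toLinearMap ∘ₗ LinearMap.inl S X M
  have ha' : Function.Bijective a := ha
  let ae : X ≃ₗ[S] X := LinearEquiv.ofBijective a ha'
  have hae : ∀ x, (e (x, 0)).1 = ae x := fun x => rfl
  let b : M →ₗ[S] X := (LinearMap.fst S X N) ∘ₗ e.toLinearMap ∘ₗ LinearMap.inr S X M
  let k : M →ₗ[S] X × M := (-(ae.symm.toLinearMap ∘ₗ b)).prod LinearMap.id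
  have split : ∀ x m, e (x, m) = e (x, 0) + e (0, m) := fun x m => by
    rw [← map_add]; simp
  have hk : ∀ m, (e (k m)).1 = 0 := by
    intro m
    have : k m = (-(ae.symm (b m)), m) := rfl
    rw [this, split, Prod.fst_add, hae]
    simp [b]
  have hk2 : ∀ z : X × M, (e z).1 = 0 → z = k z.2 := by
    rintro ⟨x, m⟩ hz
    rw [split, Prod.fst_add, hae] at hz
    have : ae x = - b m := by rw [eq_neg_iff_add_eq_zero]; exact hz
    have hx : x = -(ae.symm (b m)) := by
      rw [← map_neg, ← this]; simp
    ext
    · exact hx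
    · rfl
  refine ⟨LinearEquiv.ofLinearMap ((LinearMap.snd S X N) ∘ₗ e.toLinearMap ∘ₗ k)
    ((LinearMap.snd S X M) ∘ₗ e.symm.toLinearMap ∘ₗ LinearMap.inr S X N) ?_ ?_⟩
  · ext n
    have h1 := hk2 (e.symm (0, n)) (by simp)
    simp only [LinearMap.comp_apply, LinearMap.inr_apply, LinearMap.snd_apply,
      LinearEquiv.coe_coe, LinearMap.id_apply]
    rw [← h1]; simp
  · ext m
    have : ((0 : X), (e (k m)).2) = e (k m) := by ext <;> simp [hk]
    simp only [LinearMap.comp_apply, LinearMap.inr_apply, LinearMap.snd_apply,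
      LinearEquiv.coe_coe, LinearMap.id_apply]
    rw [this]; simp [k]

lemma cancel (hX : ∀ h : Module.End S X, IsUnit h ∨ IsUnit (1 - h))
    (e : (X × M) ≃ₗ[S] (X × N)) : Nonempty (M ≃ₗ[S] N) := by
  let a : Module.End S X := (LinearMap.fst S X N) ∘ₗ e.toLinearMap ∘ₗ LinearMap.inl S X M
  let a' : Module.End S X := (LinearMap.fst S X M) ∘ₗ e.symm.toLinearMap ∘ₗ LinearMap.inl S X N
  let b : M →ₗ[S] X := (LinearMap.fst S X N) ∘ₗ e.toLinearMap ∘ₗ LinearMap.inr S X M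
  let c' : X →ₗ[S] M := (LinearMap.snd S X M) ∘ₗ e.symm.toLinearMap ∘ₗ LinearMap.inl S X N
  by_cases hau : IsUnit a
  · exact schur e ((Module.End.isUnit_iff a).1 hau)
  have split : ∀ x m, (e (x, m)).1 = a x + b m := fun x m => by
    have : ((x, m) : X × M) = (x, 0) + (0, m) := by simp
    rw [this, map_add, Prod.fst_add]; rfl
  let u : Module.End S X := b ∘ₗ c'
  have h1 : a * a' + u = 1 := by
    ext x
    have h2 := split (e.symm (x, 0)).1 (e.symm (x, 0)).2
    simp only [Prod.mk.eta, LinearEquiv.apply_symm_apply] at h2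
    exact h2.symm
  have hu : IsUnit u := by
    rcases hX u with h | h
    · exact h
    · exfalso
      have : 1 - u = a * a' := by rw [← h1]; abel
      rw [this, Module.End.isUnit_iff] at h
      -- a surjective, hence ... use the idempotent a' v a
      obtain ⟨v, hv⟩ := (Module.End.isUnit_iff _).2 h
      have hv1 : a * (a' * ↑v⁻¹) = 1 := by rw [← mul_assoc, ← hv]; simp
      rcases hX ((a' * ↑v⁻¹) * a) with h3 | h3
      · apply hau
        rw [Module.End.isUnit_iff] at h3 ⊢
        rw [Module.End.mul_eq_comp, LinearMap.coe_comp] at h3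
        refine ⟨Function.Injective.of_comp h3.1, ?_⟩
        intro x
        exact ⟨(a' * ↑v⁻¹ : Module.End S X) x, LinearMap.congr_fun hv1 x⟩
      · -- idempotent unit
        have h4 : a * (1 - (a' * ↑v⁻¹) * a) = 0 := by
          rw [mul_sub, ← mul_assoc, hv1]; simp
        have h5 : a = 0 := by
          obtain ⟨w, hw⟩ := h3
          rw [← hw] at h4
          simpa using h4
        rw [h5, zero_mul] at hv1
        apply hau
        have h6 : (0 : Module.End S X) = 1 := hv1
        have : Subsingleton (Module.End S X) := subsingleton_of_zero_eq_one h6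
        rw [Subsingleton.elim a 1]; exact isUnit_one
  have hau2 : IsUnit (a + u) := by
    obtain ⟨w, hw⟩ := hu
    rcases hX (-(↑w⁻¹ * a)) with h | h
    · exfalso
      apply hau
      have : a = -(↑w * (-(↑w⁻¹ * a))) := by simp
      rw [this]
      exact (w.isUnit.mul h).neg
    · have : a + u = ↑w * (1 - -(↑w⁻¹ * a)) := by
        rw [sub_neg_eq_add, mul_add, ← hw]; simp [add_comm]
      rw [this]
      exact w.isUnit.mul h
  let t : (X × M) ≃ₗ[S] (X × M) := LinearEquiv.ofLinearMap
    ((LinearMap.fst S X M).prod (LinearMap.snd S X M + c' ∘ₗ LinearMap.fst S X M))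
    ((LinearMap.fst S X M).prod (LinearMap.snd S X M - c' ∘ₗ LinearMap.fst S X M))
    (by ext <;> simp) (by ext <;> simp)
  refine schur (t.trans e) ?_
  have : (fun x : X => ((t.trans e) (x, 0)).1) = (a + u : Module.End S X) := by
    funext x
    have : t (x, 0) = (x, c' x) := by
      ext <;> simp [t]
    rw [LinearEquiv.trans_apply, this, split]; rfl
  rw [this]
  exact (Module.End.isUnit_iff _).1 hau2

/-- A retract of an indecomposable is isomorphic to it. -/
lemma retract_indec [Nontrivial X]
    (hM : ∀ A B : Submodule S M, IsCompl A B → A = ⊥ ∨ B = ⊥)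
    (i : X →ₗ[S] M) (r : M →ₗ[S] X) (h : r ∘ₗ i = LinearMap.id) : Nonempty (X ≃ₗ[S] M) := by
  have h' : ∀ x, r (i x) = x := fun x => LinearMap.congr_fun h x
  have hc : IsCompl (LinearMap.range i) (LinearMap.ker r) := by
    constructor
    · rw [Submodule.disjoint_def]
      rintro _ ⟨x, rfl⟩ hx
      rw [LinearMap.mem_ker, h'] at hx
      simp [hx]
    · rw [codisjoint_iff, eq_top_iff]
      intro m _
      rw [Submodule.mem_sup]
      exact ⟨i (r m), ⟨_, rfl⟩, m - i (r m), by simp [h'], by simp⟩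
  rcases hM _ _ hc with h0 | h0
  · exfalso
    obtain ⟨x, hx⟩ := exists_ne (0 : X)
    apply hx
    have : i x = 0 := by
      have : i x ∈ LinearMap.range i := ⟨x, rfl⟩
      rwa [h0, Submodule.mem_bot] at this
    rw [← h' x, this, map_zero]
  · refine ⟨(LinearEquiv.ofBijective r ⟨LinearMap.ker_eq_bot.1 h0, fun x => ⟨i x, h' x⟩⟩).symm⟩

/-- Schanuel's lemma. -/
lemma schanuel {P Q : Type*} [AddCommGroup P] [Module S P] [AddCommGroup Q] [Module S Q]
    [Module.Projective S P] [Module.Projective S Q] (p : P →ₗ[S] M) (q : Q →ₗ[S] M)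
    (hp : Function.Surjective p) (hq : Function.Surjective q) :
    Nonempty ((LinearMap.ker p × Q) ≃ₗ[S] (LinearMap.ker q × P)) := by
  obtain ⟨s, hs⟩ := Module.projective_lifting_property p q hp
  obtain ⟨t, ht⟩ := Module.projective_lifting_property q p hq
  have hs' : ∀ x, p (s x) = q x := fun x => LinearMap.congr_fun hs x
  have ht' : ∀ x, q (t x) = p x := fun x => LinearMap.congr_fun ht x
  -- pullback
  let E : Submodule S (P × Q) := LinearMap.ker (p.coprod (-q))
  have hE : ∀ z : P × Q, z ∈ E ↔ p z.1 = q z.2 := by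
    intro z; simp [E, LinearMap.mem_ker, ← sub_eq_add_neg, sub_eq_zero]
  let e1 : (LinearMap.ker p × Q) ≃ₗ[S] E := LinearEquiv.ofLinearMap
    (LinearMap.codRestrict E
      (((LinearMap.ker p).subtype.coprod s).prod (LinearMap.snd S _ _))
      (by rintro ⟨⟨x, hx⟩, y⟩; rw [hE]; simpa [hs'] using hx))
    ((LinearMap.codRestrict (LinearMap.ker p)
      ((LinearMap.fst S P Q - s ∘ₗ LinearMap.snd S P Q) ∘ₗ E.subtype)
      (by rintro ⟨⟨x, y⟩, hz⟩; rw [hE] at hz; simp [hs']; simpa [sub_eq_zero] using hz)).prod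
      (LinearMap.snd S P Q ∘ₗ E.subtype))
    (by apply LinearMap.ext; rintro ⟨⟨x, y⟩, hz⟩; simp [Subtype.ext_iff])
    (by apply LinearMap.ext; rintro ⟨⟨x, hx⟩, y⟩; simp [Subtype.ext_iff, Prod.ext_iff])
  let e2 : (LinearMap.ker q × P) ≃ₗ[S] E := LinearEquiv.ofLinearMap
    (LinearMap.codRestrict E
      ((LinearMap.snd S _ _).prod ((LinearMap.ker q).subtype.coprod t))
      (by rintro ⟨⟨x, hx⟩, y⟩; rw [hE]; simpa [ht'] using hx))
    ((LinearMap.codRestrict (LinearMap.ker q)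
      ((LinearMap.snd S P Q - t ∘ₗ LinearMap.fst S P Q) ∘ₗ E.subtype)
      (by rintro ⟨⟨x, y⟩, hz⟩; rw [hE] at hz; simp [ht']; simpa [sub_eq_zero] using hz.symm)).prod
      (LinearMap.fst S P Q ∘ₗ E.subtype))
    (by apply LinearMap.ext; rintro ⟨⟨x, y⟩, hz⟩; simp [Subtype.ext_iff])
    (by apply LinearMap.ext; rintro ⟨⟨x, hx⟩, y⟩; simp [Subtype.ext_iff, Prod.ext_iff])
  exact ⟨e1.trans e2.symm⟩

end gen
end ITAux

namespace ITAux
section ks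
variable {R}

lemma _root_.FGMod.Iso.refl (M : FGMod R) : M.Iso M := ⟨LinearEquiv.refl _ _⟩
lemma _root_.FGMod.Iso.symm {M N : FGMod R} (h : M.Iso N) : N.Iso M := h.elim fun e => ⟨e.symm⟩
lemma _root_.FGMod.Iso.trans {M N L : FGMod R} (h : M.Iso N) (h' : N.Iso L) : M.Iso L :=
  h.elim fun e => h'.elim fun e' => ⟨e.trans e'⟩
lemma _root_.FGMod.Iso.prod {M N M' N' : FGMod R} (h : M.Iso M') (h' : N.Iso N') :
    (M.prod N).Iso (M'.prod N') :=
  h.elim fun e => h'.elim fun e' => ⟨LinearEquiv.prodCongr e e'⟩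
lemma _root_.FGMod.Iso.assoc (M N L : FGMod R) : ((M.prod N).prod L).Iso (M.prod (N.prod L)) :=
  ⟨LinearEquiv.prodAssoc _ _ _ _⟩
lemma _root_.FGMod.Iso.comm (M N : FGMod R) : (M.prod N).Iso (N.prod M) :=
  ⟨LinearEquiv.prodComm _ _ _⟩

/-- the zero module -/
def zeroMod : FGMod R := ⟨PUnit.{u+1}⟩

lemma _root_.FGMod.Iso.zero_prod (M : FGMod R) : M.Iso ((zeroMod : FGMod R).prod M) :=
  ⟨(LinearEquiv.uniqueProd (R := Rᵐᵒᵖ) (M := M) (M₂ := PUnit.{u+1})).symm⟩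

lemma zero_proj : (zeroMod : FGMod R).Proj := by
  unfold FGMod.Proj zeroMod
  infer_instance

lemma _root_.FGMod.Proj.of_iso {M N : FGMod R} (h : M.Iso N) (hM : M.Proj) : N.Proj := by
  obtain ⟨e⟩ := h
  have : Module.Projective Rᵐᵒᵖ M := hM
  exact Module.Projective.of_equiv e

lemma _root_.FGMod.Proj.prod {M N : FGMod R} (hM : M.Proj) (hN : N.Proj) : (M.prod N).Proj := by
  have : Module.Projective Rᵐᵒᵖ M := hM
  have : Module.Projective Rᵐᵒᵖ N := hN
  exact (inferInstance : Module.Projective Rᵐᵒᵖ (M × N))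

lemma _root_.FGMod.Indec.of_iso {M N : FGMod R} (h : M.Iso N) (hM : M.Indec) : N.Indec := by
  obtain ⟨e⟩ := h
  obtain ⟨h1, h2⟩ := hM
  refine ⟨e.toEquiv.symm.nontrivial, fun A B hAB => ?_⟩
  have hc : IsCompl (A.comap e.toLinearMap) (B.comap e.toLinearMap) :=
    (Submodule.orderIsoMapComap e).symm.isCompl hAB
  have aux : ∀ A : Submodule Rᵐᵒᵖ N, A.comap e.toLinearMap = ⊥ → A = ⊥ := by
    intro A hA
    rw [eq_bot_iff]
    intro x hx
    have : e.symm x ∈ A.comap e.toLinearMap := by simpa using hx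
    rw [hA] at this
    simpa using this
  exact (h2 _ _ hc).imp (aux _) (aux _)

lemma summand_iff {N M : FGMod R} [IsNoetherianRing Rᵐᵒᵖ] :
    N.IsSummand M ↔ ∃ N' : FGMod R, M.Iso (N.prod N') := by
  constructor
  · rintro ⟨A, B, h, ⟨e⟩⟩
    have : Module.Finite Rᵐᵒᵖ B := inferInstance
    exact ⟨⟨B⟩, ⟨(Submodule.prodEquivOfIsCompl A B h).symm.trans
      (LinearEquiv.prodCongr e.symm (LinearEquiv.refl _ _))⟩⟩
  · rintro ⟨N', ⟨e⟩⟩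
    let e' : M ≃ₗ[Rᵐᵒᵖ] (N × N') := e
    refine ⟨(LinearMap.range (LinearMap.inl Rᵐᵒᵖ N N')).map e'.symm.toLinearMap,
      (LinearMap.range (LinearMap.inr Rᵐᵒᵖ N N')).map e'.symm.toLinearMap, ?_, ?_⟩
    · exact (Submodule.orderIsoMapComap e'.symm).isCompl LinearMap.isCompl_range_inl_inr
    · exact ⟨(LinearEquiv.ofInjective (LinearMap.inl Rᵐᵒᵖ N N') LinearMap.inl_injective).trans
        (e'.symm.submoduleMap _)⟩

/-- iterated direct sum -/
def dsum : List (FGMod R) → FGMod R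
  | [] => zeroMod
  | X :: l => X.prod (dsum l)

lemma dsum_append (l l' : List (FGMod R)) : (dsum (l ++ l')).Iso ((dsum l).prod (dsum l')) := by
  induction l with
  | nil => exact FGMod.Iso.zero_prod _
  | cons X l ih =>
    exact ((FGMod.Iso.refl X).prod ih).trans (FGMod.Iso.assoc _ _ _).symm

lemma dsum_perm {l l' : List (FGMod R)} (h : l.Perm l') : (dsum l).Iso (dsum l') := by
  induction h with
  | nil => exact FGMod.Iso.refl _
  | cons X _ ih => exact (FGMod.Iso.refl X).prod ih
  | swap X Y l =>
    exact ((FGMod.Iso.assoc _ _ _).symm.trans ((FGMod.Iso.comm _ _).prod (FGMod.Iso.refl _))).trans (FGMod.Iso.assoc _ _ _)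
  | trans _ _ h1 h2 => exact h1.trans h2

instance isoSetoid (R : Type u) [Ring R] : Setoid (FGMod R) :=
  ⟨FGMod.Iso, FGMod.Iso.refl, FGMod.Iso.symm, FGMod.Iso.trans⟩

/-- iso classes -/
abbrev Cl (R : Type u) [Ring R] := Quotient (isoSetoid R)

/-- the class of a module -/
def mk (M : FGMod R) : Cl R := Quotient.mk _ M

lemma mk_eq {M N : FGMod R} : mk M = mk N ↔ M.Iso N := Quotient.eq

lemma mk_out (c : Cl R) : mk (Quotient.out c) = c := Quotient.out_eq c

lemma out_iso (M : FGMod R) : (Quotient.out (mk M)).Iso M := mk_eq.1 (mk_out _)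

lemma dsum_out (l : List (FGMod R)) : (dsum ((l.map mk).map Quotient.out)).Iso (dsum l) := by
  induction l with
  | nil => exact FGMod.Iso.refl _
  | cons X l ih => exact (out_iso X).prod ih

variable [IsArtinianRing Rᵐᵒᵖ]

lemma exists_decomp (M : FGMod R) : ∃ l : List (FGMod R), (∀ X ∈ l, X.Indec) ∧ M.Iso (dsum l) := by
  generalize hn : Module.length Rᵐᵒᵖ M = n
  induction n using WellFoundedLT.induction generalizing M with
  | ind n ih =>
  subst hn
  by_cases h0 : Nontrivial M
  swap
  · rw [not_nontrivial_iff_subsingleton] at h0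
    refine ⟨[], by simp, ⟨?_⟩⟩
    exact { toFun := fun _ => PUnit.unit, invFun := fun _ => 0, map_add' := fun _ _ => rfl,
            map_smul' := fun _ _ => rfl, left_inv := fun _ => Subsingleton.elim _ _,
            right_inv := fun _ => rfl }
  by_cases h1 : M.Indec
  · exact ⟨[M], by simpa using h1, (FGMod.Iso.zero_prod M).trans (FGMod.Iso.comm _ _)⟩
  have h2 : ¬ ∀ A B : Submodule Rᵐᵒᵖ M, IsCompl A B → A = ⊥ ∨ B = ⊥ := fun h => h1 ⟨h0, h⟩
  push Not at h2
  obtain ⟨A, B, hAB, hA, hB⟩ := h2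
  have hA' : A ≠ ⊤ := fun h => hB (by simpa [h] using hAB.inf_eq_bot)
  have hB' : B ≠ ⊤ := fun h => hA (by simpa [h] using hAB.inf_eq_bot)
  obtain ⟨l, hl, il⟩ := ih _ (Submodule.length_lt hA') ⟨A⟩ rfl
  obtain ⟨l', hl', il'⟩ := ih _ (Submodule.length_lt hB') ⟨B⟩ rfl
  refine ⟨l ++ l', fun X hX => ?_, ?_⟩
  · rcases List.mem_append.1 hX with h | h
    · exact hl _ h
    · exact hl' _ h
  · have : M.Iso (FGMod.prod (⟨A⟩ : FGMod R) (⟨B⟩ : FGMod R)) :=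
      ⟨(Submodule.prodEquivOfIsCompl A B hAB).symm⟩
    exact (this.trans (il.prod il')).trans (dsum_append _ _).symm

lemma _root_.FGMod.Indec.local {X : FGMod R} (hX : X.Indec) (h : Module.End Rᵐᵒᵖ X) :
    IsUnit h ∨ IsUnit (1 - h) := fitting_unit hX.2 h

lemma indec_retract_dsum {X : FGMod R} (hX : X.Indec) (l : List (FGMod R))
    (hl : ∀ Y ∈ l, Y.Indec) (i : X →ₗ[Rᵐᵒᵖ] dsum l) (r : dsum l →ₗ[Rᵐᵒᵖ] X)
    (h : r ∘ₗ i = LinearMap.id) : mk X ∈ l.map mk := by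
  have hXn : Nontrivial X := hX.1
  induction l with
  | nil =>
    exfalso
    obtain ⟨x, hx⟩ := exists_ne (0 : X)
    apply hx
    have h1 : r (i x) = x := LinearMap.congr_fun h x
    have h2 : i x = 0 := Subsingleton.elim (α := PUnit) _ _
    rw [← h1, h2, map_zero]
  | cons Y l ih =>
    let i' : X →ₗ[Rᵐᵒᵖ] (Y × dsum l) := i
    let r' : (Y × dsum l) →ₗ[Rᵐᵒᵖ] X := r
    have h' : ∀ x, r' (i' x) = x := fun x => LinearMap.congr_fun h x
    let iY := LinearMap.fst _ _ _ ∘ₗ i'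
    let il := LinearMap.snd _ _ _ ∘ₗ i'
    let rY := r' ∘ₗ LinearMap.inl Rᵐᵒᵖ Y (dsum l)
    let rl := r' ∘ₗ LinearMap.inr Rᵐᵒᵖ Y (dsum l)
    have hs : 1 - (rY ∘ₗ iY : Module.End Rᵐᵒᵖ X) = (rl ∘ₗ il : Module.End Rᵐᵒᵖ X) := by
      ext x
      have h1 : ((i' x).1, (0 : dsum l)) + ((0 : Y), (i' x).2) = i' x := by simp
      have h2 : r' ((i' x).1, (0 : dsum l)) + r' ((0 : Y), (i' x).2) = x := by
        rw [← map_add, h1, h']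
      change x - r' ((i' x).1, (0 : dsum l)) = r' ((0 : Y), (i' x).2)
      rw [sub_eq_iff_eq_add, add_comm]; exact h2.symm
    rw [List.map_cons, List.mem_cons]
    rcases hX.local (rY ∘ₗ iY) with hu | hu
    · left
      obtain ⟨u, hu⟩ := hu
      rw [mk_eq]
      refine retract_indec (hl Y (by simp)).2 iY ((↑u⁻¹ : Module.End Rᵐᵒᵖ X) ∘ₗ rY) ?_
      rw [LinearMap.comp_assoc, ← hu]
      exact u.inv_mul
    · right
      rw [hs] at hu
      obtain ⟨u, hu⟩ := hu
      refine ih (fun Z hZ => hl Z (by simp [hZ])) il ((↑u⁻¹ : Module.End Rᵐᵒᵖ X) ∘ₗ rl) ?_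
      rw [LinearMap.comp_assoc, ← hu]
      exact u.inv_mul

lemma indec_summand_dsum {X N : FGMod R} (hX : X.Indec) (l : List (FGMod R))
    (hl : ∀ Y ∈ l, Y.Indec) (e : (X.prod N).Iso (dsum l)) : mk X ∈ l.map mk := by
  obtain ⟨e⟩ := e
  let e' : (X × N) ≃ₗ[Rᵐᵒᵖ] dsum l := e
  refine indec_retract_dsum hX l hl (e'.toLinearMap ∘ₗ LinearMap.inl _ _ _)
    (LinearMap.fst _ _ _ ∘ₗ e'.symm.toLinearMap) ?_
  ext x; simp

theorem krull_schmidt (l l' : List (FGMod R)) (hl : ∀ Y ∈ l, Y.Indec) (hl' : ∀ Y ∈ l', Y.Indec)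
    (e : (dsum l).Iso (dsum l')) : (l.map mk).Perm (l'.map mk) := by
  induction l generalizing l' with
  | nil =>
    cases l' with
    | nil => exact List.Perm.refl _
    | cons Y l' =>
      exfalso
      obtain ⟨e⟩ := e
      have := (hl' Y (by simp)).1
      obtain ⟨y, hy⟩ := exists_ne (0 : Y)
      let e' : PUnit.{u+1} ≃ₗ[Rᵐᵒᵖ] (Y × dsum l') := e
      have : ((y, 0) : Y × dsum l') = 0 := e'.symm.injective (Subsingleton.elim _ _)
      exact hy (congrArg Prod.fst this)
  | cons X l ih =>
    have hm := indec_summand_dsum (hl X (by simp)) l' hl' e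
    obtain ⟨Y, hY, hXY⟩ := List.mem_map.1 hm
    obtain ⟨s, t, rfl⟩ := List.append_of_mem hY
    have hp : (s ++ Y :: t).Perm (Y :: (s ++ t)) := List.perm_middle
    have e2 : (X.prod (dsum l)).Iso (X.prod (dsum (s ++ t))) :=
      (e.trans (dsum_perm hp)).trans ((mk_eq.1 hXY).prod (FGMod.Iso.refl _))
    have e3 : (dsum l).Iso (dsum (s ++ t)) := by
      obtain ⟨e2⟩ := e2
      exact cancel (hl X (by simp)).local e2
    have h4 := ih (s ++ t) (fun Z hZ => hl Z (by simp [hZ]))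
      (fun Z hZ => hl' Z (by
        rcases List.mem_append.1 hZ with h | h <;> simp [h])) e3
    refine List.Perm.trans ?_ (hp.map mk).symm
    rw [List.map_cons, List.map_cons, hXY]
    exact h4.cons _

/-- multiset of indecomposable summands -/
noncomputable def dm (M : FGMod R) : Multiset (Cl R) :=
  ((Classical.choose (exists_decomp M)).map mk : List (Cl R))

lemma dm_eq {M : FGMod R} (l : List (FGMod R)) (hl : ∀ Y ∈ l, Y.Indec) (e : M.Iso (dsum l)) :
    dm M = (l.map mk : List (Cl R)) := by
  obtain ⟨h1, h2⟩ := Classical.choose_spec (exists_decomp M)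
  exact Multiset.coe_eq_coe.2 (krull_schmidt _ _ h1 hl (h2.symm.trans e))

lemma dm_iso {M N : FGMod R} (e : M.Iso N) : dm M = dm N := by
  obtain ⟨h1, h2⟩ := Classical.choose_spec (exists_decomp N)
  exact dm_eq _ h1 (e.trans h2)

lemma dm_prod (M N : FGMod R) : dm (M.prod N) = dm M + dm N := by
  obtain ⟨l, h1, h2⟩ := exists_decomp M
  obtain ⟨l', h1', h2'⟩ := exists_decomp N
  rw [dm_eq l h1 h2, dm_eq l' h1' h2', dm_eq (l ++ l') _ ((h2.prod h2').trans (dsum_append _ _).symm)]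
  · simp
  · intro Y hY
    rcases List.mem_append.1 hY with h | h
    · exact h1 _ h
    · exact h1' _ h

lemma dm_indec {M : FGMod R} (h : M.Indec) : dm M = {mk M} := by
  rw [dm_eq [M] (by simpa using h) ((FGMod.Iso.zero_prod M).trans (FGMod.Iso.comm _ _))]; rfl

/-- direct sum of representatives -/
noncomputable def core (s : Multiset (Cl R)) : FGMod R := dsum (s.toList.map Quotient.out)

omit [IsArtinianRing Rᵐᵒᵖ] in
lemma core_coe (l : List (FGMod R)) : (core ((l.map mk : List (Cl R)) : Multiset (Cl R))).Iso (dsum l) := by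
  refine FGMod.Iso.trans (dsum_perm ?_) (dsum_out l)
  exact ((Multiset.coe_toList _ |> Multiset.coe_eq_coe.1)).map _

omit [IsArtinianRing Rᵐᵒᵖ] in
lemma core_add (s t : Multiset (Cl R)) : (core (s + t)).Iso ((core s).prod (core t)) := by
  refine FGMod.Iso.trans (dsum_perm ?_) (dsum_append _ _)
  rw [← List.map_append]
  refine List.Perm.map _ (Multiset.coe_eq_coe.1 ?_)
  rw [← Multiset.coe_add]; simp

lemma core_dm (M : FGMod R) : (core (dm M)).Iso M := by
  obtain ⟨l, h1, h2⟩ := exists_decomp M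
  rw [dm_eq l h1 h2]
  exact (core_coe l).trans h2.symm

lemma indec_of_mem_dm {M : FGMod R} {c : Cl R} (h : c ∈ dm M) : (Quotient.out c).Indec := by
  obtain ⟨l, h1, h2⟩ := exists_decomp M
  rw [dm_eq l h1 h2] at h
  obtain ⟨Y, hY, rfl⟩ := List.mem_map.1 (Multiset.mem_coe.1 h)
  exact FGMod.Indec.of_iso (out_iso Y).symm (h1 Y hY)

/-- projective class -/
def pj (c : Cl R) : Prop := (Quotient.out c).Proj

open Classical in
/-- multiset of nonprojective indecomposable summands -/
noncomputable def np (M : FGMod R) : Multiset (Cl R) := (dm M).filter (fun c => ¬ pj c)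

lemma np_iso {M N : FGMod R} (e : M.Iso N) : np M = np N := by rw [np, np, dm_iso e]

lemma np_prod (M N : FGMod R) : np (M.prod N) = np M + np N := by
  rw [np, np, np, dm_prod, Multiset.filter_add]

omit [IsArtinianRing Rᵐᵒᵖ] in
lemma dsum_proj (l : List (FGMod R)) (h : ∀ X ∈ l, X.Proj) : (dsum l).Proj := by
  induction l with
  | nil => exact zero_proj
  | cons X l ih => exact (h X (by simp)).prod (ih fun Y hY => h Y (by simp [hY]))

lemma exists_core_np (M : FGMod R) : ∃ P : FGMod R, P.Proj ∧ M.Iso ((core (np M)).prod P) := by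
  classical
  refine ⟨core ((dm M).filter (fun c => pj c)), ?_, ?_⟩
  · apply dsum_proj
    intro X hX
    obtain ⟨c, hc, rfl⟩ := List.mem_map.1 hX
    rw [Multiset.mem_toList, Multiset.mem_filter] at hc
    exact hc.2
  · refine ((core_dm M).symm.trans ?_).trans (core_add _ _)
    have : (dm M) = np M + (dm M).filter (fun c => pj c) := by
      rw [np, add_comm]
      convert (Multiset.filter_add_not (fun c => pj c) (dm M)).symm
    rw [← this]
    exact FGMod.Iso.refl _

lemma np_proj {P : FGMod R} (h : P.Proj) : np P = 0 := by
  classical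
  rw [np, Multiset.filter_eq_nil]
  intro c hc hn
  apply hn
  obtain ⟨t, ht⟩ := Multiset.exists_cons_of_mem hc
  have e : P.Iso ((core {c}).prod (core t)) := by
    refine (core_dm P).symm.trans ?_
    rw [ht, ← Multiset.singleton_add]
    exact core_add _ _
  have e1 : (core ({c} : Multiset (Cl R))).Iso (Quotient.out c) := by
    have : (core ({c} : Multiset (Cl R))) = (Quotient.out c).prod zeroMod := by
      simp [core, dsum]
    rw [this]
    exact (FGMod.Iso.comm _ _).trans (FGMod.Iso.zero_prod _).symm
  obtain ⟨e'⟩ := e.trans (e1.prod (FGMod.Iso.refl (core t)))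
  let e'' : P ≃ₗ[Rᵐᵒᵖ] ((Quotient.out c).carrier × (core t).carrier) := e'
  have : Module.Projective Rᵐᵒᵖ P := h
  exact Module.Projective.of_split (e''.symm.toLinearMap ∘ₗ LinearMap.inl _ _ _)
    (LinearMap.fst _ _ _ ∘ₗ e''.toLinearMap) (by ext x; simp)

end ks
end ITAux

namespace ITAux
section hom
open CategoryTheory
variable {R}

/-- projective dimension `< n` in the sense of Mathlib -/
abbrev PD (M : FGMod R) (n : ℕ) : Prop := HasProjectiveDimensionLT (ModuleCat.of Rᵐᵒᵖ M) n

/-- Short exact sequence of modules as a short complex. -/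
abbrev sc {A B C : FGMod R} (f : A →ₗ[Rᵐᵒᵖ] B) (g : B →ₗ[Rᵐᵒᵖ] C)
    (hfg : LinearMap.range f = LinearMap.ker g) : ShortComplex (ModuleCat.{u} Rᵐᵒᵖ) :=
  ShortComplex.mk (ModuleCat.ofHom f) (ModuleCat.ofHom g) (by
    ext x
    have : f x ∈ LinearMap.ker g := hfg ▸ ⟨x, rfl⟩
    simpa using this)

lemma sc_exact {A B C : FGMod R} (f : A →ₗ[Rᵐᵒᵖ] B) (g : B →ₗ[Rᵐᵒᵖ] C)
    (hf : Function.Injective f) (hg : Function.Surjective g)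
    (hfg : LinearMap.range f = LinearMap.ker g) : (sc f g hfg).ShortExact where
  exact := by
    rw [ShortComplex.moduleCat_exact_iff_range_eq_ker]
    exact hfg
  mono_f := (ModuleCat.mono_iff_injective _).2 hf
  epi_g := (ModuleCat.epi_iff_surjective _).2 hg

lemma PD_one_iff {M : FGMod R} : PD M 1 ↔ M.Proj := by
  rw [PD, ← projective_iff_hasProjectiveDimensionLT_one]
  exact (IsProjective.iff_projective _).symm

lemma PD.of_iso {M N : FGMod R} (h : M.Iso N) {n : ℕ} (hM : PD M n) : PD N n := by
  obtain ⟨e⟩ := h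
  exact hasProjectiveDimensionLT_of_iso (LinearEquiv.toModuleIso e) n

lemma PD.mono {M : FGMod R} {n m : ℕ} (hM : PD M n) (h : n ≤ m) : PD M m :=
  hasProjectiveDimensionLT_of_ge _ n m h

lemma PD.left {M N : FGMod R} {n : ℕ} (h : PD (M.prod N) n) : PD M n := by
  have : CategoryTheory.Retract (ModuleCat.of Rᵐᵒᵖ M) (ModuleCat.of Rᵐᵒᵖ (M.prod N)) :=
    { i := ModuleCat.ofHom (LinearMap.inl Rᵐᵒᵖ M N)
      r := ModuleCat.ofHom (LinearMap.fst Rᵐᵒᵖ M N)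
      retract := by ext x; rfl }
  exact this.hasProjectiveDimensionLT n

lemma PD.prod {M N : FGMod R} {n : ℕ} (h : PD M n) (h' : PD N n) : PD (M.prod N) n := by
  refine (sc_exact (A := M) (B := M.prod N) (C := N) (LinearMap.inl Rᵐᵒᵖ M N)
    (LinearMap.snd Rᵐᵒᵖ M N) LinearMap.inl_injective LinearMap.snd_surjective
    (LinearMap.range_inl Rᵐᵒᵖ M N)).hasProjectiveDimensionLT_X₂ n h h'

variable [IsArtinianRing Rᵐᵒᵖ]

/-- kernel as an object -/
def kr {P M : FGMod R} (f : P →ₗ[Rᵐᵒᵖ] M) : FGMod R := ⟨LinearMap.ker f⟩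

lemma PD_ker {P M : FGMod R} (f : P →ₗ[Rᵐᵒᵖ] M) (hP : P.Proj) (hf : Function.Surjective f)
    (n : ℕ) : PD M (n + 2) ↔ PD (kr f) (n + 1) := by
  have := sc_exact (A := kr f) (B := P) (C := M) (LinearMap.ker f).subtype f
    Subtype.val_injective hf (Submodule.range_subtype _)
  refine this.hasProjectiveDimensionLT_X₃_iff n ?_
  exact projective_iff_hasProjectiveDimensionLT_one.2 (PD_one_iff.2 hP)

lemma exists_free (M : FGMod R) : ∃ (P : FGMod R) (f : P →ₗ[Rᵐᵒᵖ] M), P.Proj ∧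
    Function.Surjective f := by
  obtain ⟨n, f, hf⟩ := Module.Finite.exists_fin' Rᵐᵒᵖ M
  let e : (Fin n → ULift.{u} Rᵐᵒᵖ) ≃ₗ[Rᵐᵒᵖ] (Fin n → Rᵐᵒᵖ) :=
    LinearEquiv.piCongrRight fun _ => ULift.moduleEquiv
  have h1 : Module.Projective Rᵐᵒᵖ (Fin n → ULift.{u} Rᵐᵒᵖ) := Module.Projective.of_equiv e.symm
  have h2 : Module.Finite Rᵐᵒᵖ (Fin n → ULift.{u} Rᵐᵒᵖ) := Module.Finite.equiv e.symm
  exact ⟨⟨Fin n → ULift.{u} Rᵐᵒᵖ⟩, f ∘ₗ e.toLinearMap, h1, hf.comp e.surjective⟩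

lemma exists_cover (M : FGMod R) : ∃ (P : FGMod R) (f : P →ₗ[Rᵐᵒᵖ] M), IsProjCover M P f := by
  obtain ⟨P0, f0, hP0, hf0⟩ := exists_free M
  let T : Set ℕ∞ := {n | ∃ (P : FGMod R) (f : P →ₗ[Rᵐᵒᵖ] M), P.Proj ∧ Function.Surjective f ∧
    Module.length Rᵐᵒᵖ P = n}
  have hT : T.Nonempty := ⟨_, P0, f0, hP0, hf0, rfl⟩
  obtain ⟨P, f, hP, hf, hl⟩ := WellFounded.min_mem wellFounded_lt T hT
  refine ⟨P, f, hP, hf, fun N hN => ?_⟩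
  have hPp : Module.Projective Rᵐᵒᵖ P := hP
  have hs : Function.Surjective (f ∘ₗ N.subtype) := by
    intro m
    obtain ⟨p, rfl⟩ := hf m
    have : p ∈ N ⊔ LinearMap.ker f := by rw [hN]; trivial
    obtain ⟨y, hy, z, hz, rfl⟩ := Submodule.mem_sup.1 this
    exact ⟨⟨y, hy⟩, by simp [LinearMap.mem_ker.1 hz]⟩
  obtain ⟨h, hh⟩ := Module.projective_lifting_property (f ∘ₗ N.subtype) f hs
  let k : Module.End Rᵐᵒᵖ P := N.subtype ∘ₗ h
  have hk : ∀ x, f (k x) = f x := fun x => LinearMap.congr_fun hh x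
  have hkn : ∀ n x, f ((k ^ n) x) = f x := by
    intro n
    induction n with
    | zero => intro x; rfl
    | succ n ih => intro x; rw [pow_succ', Module.End.mul_apply, hk, ih]
  obtain ⟨n, hn⟩ := Filter.eventually_atTop.1 (LinearMap.eventually_isCompl_ker_pow_range_pow k)
  have h1 := hn (n + 1) (by omega)
  by_contra hne
  have hr : LinearMap.range (k ^ (n + 1)) ≠ ⊤ := by
    intro hr
    apply hne
    rw [eq_top_iff, ← hr]
    rintro _ ⟨x, rfl⟩
    rw [pow_succ', Module.End.mul_apply]
    exact (h _).2
  have hlt := Submodule.length_lt hr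
  rw [hl] at hlt
  refine WellFounded.not_lt_min wellFounded_lt T (x := Module.length Rᵐᵒᵖ (LinearMap.range (k ^ (n+1)))) ?_ hlt
  refine ⟨⟨LinearMap.range (k ^ (n+1))⟩, f ∘ₗ (LinearMap.range (k ^ (n+1))).subtype, ?_, ?_, rfl⟩
  · let e := Submodule.prodEquivOfIsCompl _ _ h1
    exact Module.Projective.of_split (e.toLinearMap ∘ₗ LinearMap.inr _ _ _)
      (LinearMap.snd _ _ _ ∘ₗ e.symm.toLinearMap) (by apply LinearMap.ext; intro x; simp)
  · intro m
    obtain ⟨p, rfl⟩ := hf m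
    exact ⟨⟨(k ^ (n+1)) p, ⟨p, rfl⟩⟩, hkn (n+1) p⟩

lemma exists_syz (M : FGMod R) : ∃ N, IsSyzygy M N := by
  obtain ⟨P, f, h⟩ := exists_cover M
  exact ⟨kr f, P, f, h, ⟨LinearEquiv.refl _ _⟩⟩

lemma exists_syzN (n : ℕ) (M : FGMod R) : ∃ N, IsSyzygyN n M N := by
  induction n generalizing M with
  | zero => exact ⟨M, FGMod.Iso.refl M⟩
  | succ n ih =>
    obtain ⟨L, hL⟩ := exists_syz M
    obtain ⟨N, hN⟩ := ih L
    exact ⟨N, L, hL, hN⟩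

lemma PD_syz {M N : FGMod R} (h : IsSyzygy M N) (n : ℕ) : PD M (n + 2) ↔ PD N (n + 1) := by
  obtain ⟨P, f, ⟨h1, h2, h3⟩, e⟩ := h
  have e' : N.Iso (kr f) := e
  rw [PD_ker f h1 h2]
  exact ⟨fun h => h.of_iso e'.symm, fun h => h.of_iso e'⟩

lemma PD_iff (n : ℕ) (M : FGMod R) : HasPdLE n M ↔ PD M (n + 1) := by
  induction n generalizing M with
  | zero => exact PD_one_iff.symm
  | succ n ih =>
    constructor
    · rintro (h | ⟨N, h, h'⟩)
      · exact (PD_one_iff.2 h).mono (by omega)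
      · exact (PD_syz h n).2 ((ih N).1 h')
    · intro h
      obtain ⟨N, hN⟩ := exists_syz M
      exact Or.inr ⟨N, hN, (ih N).2 ((PD_syz hN n).1 h)⟩

lemma PD_syzN {n k : ℕ} {M N : FGMod R} (h : IsSyzygyN n M N) (hM : PD M (n + k + 1)) :
    PD N (k + 1) := by
  induction n generalizing M with
  | zero => exact PD.of_iso h (by simpa using hM)
  | succ n ih =>
    obtain ⟨L, hL, h'⟩ := h
    exact ih h' ((PD_syz hL (n + k)).1 (hM.mono (by omega)))

lemma pdIT_spec {M : FGMod R} (h : FinPd M) : HasPdLE (pdIT M) M := Nat.sInf_mem h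

lemma pdIT_le {M : FGMod R} {n : ℕ} (h : HasPdLE n M) : pdIT M ≤ n := Nat.sInf_le h

lemma pdIT_core (M : FGMod R) : pdIT M = pdIT (core (np M)) := by
  obtain ⟨P, hP, e⟩ := exists_core_np M
  unfold pdIT
  congr 1
  ext n
  simp only [Set.mem_ofPred_eq, PD_iff]
  constructor
  · intro h
    exact (h.of_iso e).left
  · intro h
    exact (h.prod ((PD_one_iff.2 hP).mono (by omega))).of_iso e.symm

end hom
end ITAux

namespace ITAux
section extpart
open CategoryTheory Abelian
variable {R}

section pb
variable {S : Type u} [Ring S] {U V W T : ModuleCat.{u} S} {i : ℕ}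

/-- pullback on Ext -/
noncomputable def pb (φ : U ⟶ V) (α : Ext.{u} V T i) : Ext.{u} U T i :=
  (Ext.mk₀ φ).comp α (zero_add i)

lemma pb_comp (φ : U ⟶ V) (χ : V ⟶ W) (α : Ext.{u} W T i) : pb (φ ≫ χ) α = pb φ (pb χ α) :=
  (Ext.mk₀_comp_mk₀_assoc φ χ α).symm

lemma pb_id (α : Ext.{u} U T i) : pb (𝟙 U) α = α := Ext.mk₀_id_comp α

lemma pb_zero_left (α : Ext.{u} V T i) : pb (0 : U ⟶ V) α = 0 := by
  simp [pb]

lemma pb_zero (φ : U ⟶ V) : pb φ (0 : Ext.{u} V T i) = 0 := by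
  simp [pb]

lemma pb_add_left (φ χ : U ⟶ V) (α : Ext.{u} V T i) : pb (φ + χ) α = pb φ α + pb χ α := by
  simp [pb, Ext.mk₀_add, Ext.add_comp]

/-- the basic diagram chase -/
lemma chase {Sx : ShortComplex (ModuleCat.{u} S)} (hS : Sx.ShortExact)
    (ιX : W ⟶ Sx.X₁) (πX : Sx.X₁ ⟶ W) (ιY : W ⟶ Sx.X₂) (πY : Sx.X₂ ⟶ W)
    (hX1 : ιX ≫ πX = 𝟙 W)
    (hX : ∀ j, 1 ≤ j → ∀ (T : ModuleCat.{u} S) (x : Ext.{u} Sx.X₁ T j), pb (πX ≫ ιX) x = x)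
    (hY : ∀ j, 1 ≤ j → ∀ (T : ModuleCat.{u} S) (x : Ext.{u} Sx.X₂ T j), pb (πY ≫ ιY) x = x) :
    (∀ d, HasProjectiveDimensionLT Sx.X₃ d → ∀ j, 1 ≤ j → d ≤ j → ∀ T : ModuleCat.{u} S,
      Function.Surjective (pb (ιX ≫ Sx.f ≫ πY) : Ext.{u} W T j → Ext.{u} W T j)) ∧
    (∀ j, 1 ≤ j → (∀ T : ModuleCat.{u} S,
      Function.Surjective (pb (ιX ≫ Sx.f ≫ πY) : Ext.{u} W T j → Ext.{u} W T j)) →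
      (∀ (T : ModuleCat.{u} S) (α : Ext.{u} W T (j + 1)), pb (ιX ≫ Sx.f ≫ πY) α = 0 → α = 0) →
      ∀ (T : ModuleCat.{u} S) (ζ : Ext.{u} Sx.X₃ T (j + 1)), ζ = 0) := by
  constructor
  · intro d hd j hj hdj T α
    have h0 : hS.extClass.comp (pb πX α) (add_comm 1 j) = 0 :=
      Ext.eq_zero_of_hasProjectiveDimensionLT _ d (by omega)
    obtain ⟨β, hβ⟩ := Ext.contravariant_sequence_exact₁ hS T (pb πX α) (add_comm 1 j) h0
    have hβ' : pb Sx.f β = pb πX α := hβ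
    refine ⟨pb ιY β, ?_⟩
    rw [pb_comp, pb_comp, ← pb_comp πY ιY, hY j hj, hβ', ← pb_comp, hX1, pb_id]
  · intro j hj hs hi T ζ
    have h1 : pb Sx.g ζ = 0 := by
      rw [← hY (j+1) (by omega) T (pb Sx.g ζ), pb_comp]
      have : pb ιY (pb Sx.g ζ) = 0 := by
        apply hi
        rw [pb_comp, pb_comp, ← pb_comp πY ιY, hY (j + 1) (by omega), ← pb_comp Sx.f, Sx.zero,
          pb_zero_left, pb_zero]
      rw [this, pb_zero]
    obtain ⟨x, hx⟩ := Ext.contravariant_sequence_exact₃ hS T ζ h1 (add_comm 1 j)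
    obtain ⟨α, hα⟩ := hs T (pb ιX x)
    have h2 : x = pb Sx.f (pb πY α) := by
      rw [← hX j hj T x, pb_comp, ← hα, ← pb_comp πX, ← pb_comp]
      rw [show πX ≫ ιX ≫ Sx.f ≫ πY = (πX ≫ ιX) ≫ Sx.f ≫ πY by simp, pb_comp, hX j hj]
    rw [← hx, h2]
    exact hS.extClass_comp_assoc (pb πY α)

end pb

variable [IsArtinianRing Rᵐᵒᵖ]

lemma ret_of_iso {X W P : FGMod R} (hP : P.Proj) (e : X.Iso (W.prod P)) :
    ∃ (ι : ModuleCat.of Rᵐᵒᵖ W ⟶ ModuleCat.of Rᵐᵒᵖ X)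
      (π : ModuleCat.of Rᵐᵒᵖ X ⟶ ModuleCat.of Rᵐᵒᵖ W), ι ≫ π = 𝟙 _ ∧
      ∀ j, 1 ≤ j → ∀ (T : ModuleCat.{u} Rᵐᵒᵖ) (x : Ext.{u} (ModuleCat.of Rᵐᵒᵖ X) T j),
        pb (π ≫ ι) x = x := by
  obtain ⟨e⟩ := e
  let e' : X ≃ₗ[Rᵐᵒᵖ] (W × P) := e
  refine ⟨ModuleCat.ofHom (e'.symm.toLinearMap ∘ₗ LinearMap.inl _ _ _),
    ModuleCat.ofHom (LinearMap.fst _ _ _ ∘ₗ e'.toLinearMap), ?_, ?_⟩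
  · ext x; simp
  · intro j hj T x
    let ρ : ModuleCat.of Rᵐᵒᵖ X ⟶ ModuleCat.of Rᵐᵒᵖ P :=
      ModuleCat.ofHom (LinearMap.snd _ _ _ ∘ₗ e'.toLinearMap)
    let σ : ModuleCat.of Rᵐᵒᵖ P ⟶ ModuleCat.of Rᵐᵒᵖ X :=
      ModuleCat.ofHom (e'.symm.toLinearMap ∘ₗ LinearMap.inr _ _ _)
    have h1 : ModuleCat.ofHom (LinearMap.fst _ _ _ ∘ₗ e'.toLinearMap) ≫
        ModuleCat.ofHom (e'.symm.toLinearMap ∘ₗ LinearMap.inl _ _ _) + ρ ≫ σ = 𝟙 _ := by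
      ext x
      simp [ρ, σ, ← map_add]
    have h2 : pb (ρ ≫ σ) x = 0 := by
      rw [pb_comp]
      have := PD_one_iff.2 hP
      have : pb σ x = 0 := Ext.eq_zero_of_hasProjectiveDimensionLT _ 1 hj
      rw [this, pb_zero]
    have h3 := congrArg (fun φ => pb φ x) h1
    simp only [pb_add_left, pb_id] at h3
    rw [h2, add_zero] at h3
    exact h3

lemma ext_main {X Y Z W P Q : FGMod R} (f : X →ₗ[Rᵐᵒᵖ] Y) (g : Y →ₗ[Rᵐᵒᵖ] Z)
    (hf : Function.Injective f) (hg : Function.Surjective g)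
    (hfg : LinearMap.range f = LinearMap.ker g) (hP : P.Proj) (hQ : Q.Proj)
    (eX : X.Iso (W.prod P)) (eY : Y.Iso (W.prod Q)) (d : ℕ) (hZ : PD Z d) :
    ∃ U V : FGMod R, W.Iso (U.prod V) ∧ (∃ n, PD U n) ∧ ∀ e, 1 ≤ e → PD U e → PD Z (e + 1) := by
  obtain ⟨ιX, πX, hX1, hX⟩ := ret_of_iso hP eX
  obtain ⟨ιY, πY, hY1, hY⟩ := ret_of_iso hQ eY
  obtain ⟨c1, c2⟩ := chase (sc_exact f g hf hg hfg) ιX πX ιY πY hX1 hX hY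
  generalize hac : ιX ≫ (sc f g hfg).f ≫ πY = ac at c1 c2
  let a : Module.End Rᵐᵒᵖ W := ac.hom
  have hpow : ∀ n, ModuleCat.ofHom (a ^ (n + 1)) = ModuleCat.ofHom (a ^ n) ≫ ac := by
    intro n; rw [pow_succ']; rfl
  have hpow' : ∀ n, ModuleCat.ofHom (a ^ (n + 1)) = ac ≫ ModuleCat.ofHom (a ^ n) := by
    intro n; rw [pow_succ]; rfl
  obtain ⟨n, hn⟩ := Filter.eventually_atTop.1 (LinearMap.eventually_isCompl_ker_pow_range_pow a)
  have h1 := hn (n + 1) (by omega)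
  let A := LinearMap.ker (a ^ (n + 1))
  let B := LinearMap.range (a ^ (n + 1))
  have h1 : IsCompl A B := h1
  let E := Submodule.prodEquivOfIsCompl A B h1
  let ι : ModuleCat.of Rᵐᵒᵖ A ⟶ ModuleCat.of Rᵐᵒᵖ W := ModuleCat.ofHom A.subtype
  let q : ModuleCat.of Rᵐᵒᵖ W ⟶ ModuleCat.of Rᵐᵒᵖ A :=
    ModuleCat.ofHom (LinearMap.fst _ _ _ ∘ₗ E.symm.toLinearMap)
  have hE : ∀ y : A, E.symm (y : W) = (y, 0) := by
    intro y; simp [E]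
  have hιq : ι ≫ q = 𝟙 _ := by
    ext y
    simp [ι, q, hE]
  have hιa : ι ≫ ModuleCat.ofHom (a ^ (n + 1)) = 0 := by
    ext y
    exact LinearMap.mem_ker.1 y.2
  refine ⟨⟨A⟩, ⟨B⟩, ⟨E.symm⟩, ⟨max d 1, ?_⟩, ?_⟩
  · apply HasProjectiveDimensionLT.mk
    intro i hi T γ
    have hs : ∀ k, Function.Surjective (pb (ModuleCat.ofHom (a ^ k)) :
        Ext.{u} (ModuleCat.of Rᵐᵒᵖ W) T i → Ext.{u} (ModuleCat.of Rᵐᵒᵖ W) T i) := by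
      intro k
      induction k with
      | zero => intro α; exact ⟨α, pb_id α⟩
      | succ k ih =>
        intro α
        obtain ⟨β, rfl⟩ := ih α
        obtain ⟨γ, rfl⟩ := c1 d hZ i (by omega) (by omega) T β
        exact ⟨γ, by rw [hpow, pb_comp]⟩
    obtain ⟨β, hβ⟩ := hs (n + 1) (pb q γ)
    have : pb ι (pb q γ) = γ := by rw [← pb_comp, hιq, pb_id]
    rw [← this, ← hβ, ← pb_comp, hιa, pb_zero_left]
  · intro e he hU
    have hc : Function.Injective ((a ^ (n + 1)) + A.subtype ∘ₗ
        (LinearMap.fst _ _ _ ∘ₗ E.symm.toLinearMap) : Module.End Rᵐᵒᵖ W) := by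
      rw [← LinearMap.ker_eq_bot, eq_bot_iff]
      intro x hx
      have hx : (a ^ (n + 1)) x + ((E.symm x).1 : W) = 0 := hx
      have hB : (a ^ (n + 1)) x ∈ B := ⟨x, rfl⟩
      have hA : (a ^ (n + 1)) x ∈ A := by
        rw [eq_neg_of_add_eq_zero_left hx]; exact A.neg_mem (E.symm x).1.2
      have h0 : (a ^ (n + 1)) x = 0 := (Submodule.disjoint_def.1 h1.disjoint) _ hA hB
      rw [h0, zero_add] at hx
      have hxA : x ∈ A := h0
      have := hE ⟨x, hxA⟩
      rw [this] at hx
      simpa using hx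
    have hcb := IsArtinian.bijective_of_injective_endomorphism _ hc
    let ce : ModuleCat.of Rᵐᵒᵖ W ≅ ModuleCat.of Rᵐᵒᵖ W :=
      (LinearEquiv.ofBijective _ hcb).toModuleIso
    have hce : ce.hom = ModuleCat.ofHom (a ^ (n + 1)) + q ≫ ι := rfl
    have hpb : ∀ j, e ≤ j → ∀ (T : ModuleCat.{u} Rᵐᵒᵖ)
        (α : Ext.{u} (ModuleCat.of Rᵐᵒᵖ W) T j),
        pb (ModuleCat.ofHom (a ^ (n + 1))) α = pb ce.hom α := by
      intro j hj T α
      have : pb ι α = 0 := Ext.eq_zero_of_hasProjectiveDimensionLT _ e hj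
      rw [hce, pb_add_left, pb_comp q, this, pb_zero, add_zero]
    have hsur : ∀ j, e ≤ j → ∀ T : ModuleCat.{u} Rᵐᵒᵖ, Function.Surjective
        (pb ac : Ext.{u} (ModuleCat.of Rᵐᵒᵖ W) T j → Ext.{u} (ModuleCat.of Rᵐᵒᵖ W) T j) := by
      intro j hj T α
      refine ⟨pb (ModuleCat.ofHom (a ^ n)) (pb ce.inv α), ?_⟩
      rw [← pb_comp ac, ← hpow', hpb j hj, ← pb_comp, ce.hom_inv_id, pb_id]
    have hinj : ∀ j, e ≤ j → ∀ (T : ModuleCat.{u} Rᵐᵒᵖ)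
        (α : Ext.{u} (ModuleCat.of Rᵐᵒᵖ W) T j), pb ac α = 0 → α = 0 := by
      intro j hj T α hα
      have h3 : pb ce.hom α = 0 := by
        rw [← hpb j hj, hpow, pb_comp, hα, pb_zero]
      rw [← pb_id α, ← ce.inv_hom_id, pb_comp, h3, pb_zero]
    apply HasProjectiveDimensionLT.mk
    intro i hi T ζ
    obtain ⟨j, rfl⟩ : ∃ j, i = j + 1 := ⟨i - 1, by omega⟩
    exact c2 j (by omega) (hsur j (by omega)) (hinj (j + 1) (by omega)) T ζ

end extpart
end ITAux

namespace ITAux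
section kgrp
variable {R}

lemma cls_prod' {A B C : FGMod R} (h : A.Iso (B.prod C)) :
    ITcls R A = ITcls R B + ITcls R C := by
  rw [← sub_eq_zero, ← sub_sub]
  exact (QuotientAddGroup.eq_zero_iff _).2
    (AddSubgroup.subset_closure (Or.inl ⟨A, B, C, h, rfl⟩))

lemma cls_proj {P : FGMod R} (h : P.Proj) : ITcls R P = 0 :=
  (QuotientAddGroup.eq_zero_iff _).2 (AddSubgroup.subset_closure (Or.inr ⟨P, h, rfl⟩))

lemma cls_iso {M N : FGMod R} (h : M.Iso N) : ITcls R M = ITcls R N := by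
  rw [cls_prod' (h.trans (FGMod.Iso.zero_prod N)), cls_proj zero_proj, zero_add]

lemma cls_dsum (l : List (FGMod R)) : ITcls R (dsum l) = (l.map (ITcls R)).sum := by
  induction l with
  | nil => exact cls_proj zero_proj
  | cons X l ih => rw [List.map_cons, List.sum_cons, ← ih]; exact cls_prod' (FGMod.Iso.refl _)

lemma exists_sub (x : ITK R) : ∃ M N : FGMod R, x = ITcls R M - ITcls R N := by
  obtain ⟨y, rfl⟩ := QuotientAddGroup.mk_surjective x
  induction y using FreeAbelianGroup.induction_on with
  | zero => exact ⟨zeroMod, zeroMod, by rw [sub_self]; rfl⟩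
  | of M => exact ⟨M, zeroMod, by rw [cls_proj zero_proj, sub_zero]; rfl⟩
  | neg M _ => exact ⟨zeroMod, M, by rw [cls_proj zero_proj, zero_sub]; rfl⟩
  | add y z hy hz =>
    obtain ⟨M, N, h⟩ := hy
    obtain ⟨M', N', h'⟩ := hz
    refine ⟨M.prod M', N.prod N', ?_⟩
    rw [cls_prod' (FGMod.Iso.refl (M.prod M')), cls_prod' (FGMod.Iso.refl (N.prod N')),
      add_sub_add_comm, ← h, ← h']
    rfl

variable [IsArtinianRing Rᵐᵒᵖ]

open Classical in
/-- multiplicities of nonprojective indecomposables -/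
noncomputable def Phi (R : Type u) [Ring R] [IsArtinianRing Rᵐᵒᵖ] : ITK R →+ (Cl R → ℤ) :=
  QuotientAddGroup.lift (AddSubgroup.closure (ITRel R))
    (FreeAbelianGroup.lift fun M c => (((np M).count c : ℕ) : ℤ)) (by
      rw [AddSubgroup.closure_le]
      rintro x (⟨A, B, C, e, rfl⟩ | ⟨P, hP, rfl⟩)
      · have e' : A.Iso (B.prod C) := e
        simp only [SetLike.mem_coe, AddMonoidHom.mem_ker, map_sub, FreeAbelianGroup.lift_apply_of]
        funext c
        simp [np_iso e', np_prod]
      · simp only [SetLike.mem_coe, AddMonoidHom.mem_ker, FreeAbelianGroup.lift_apply_of]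
        funext c
        simp [np_proj hP])

open Classical in
lemma Phi_cls (M : FGMod R) : Phi R (ITcls R M) = fun c => (((np M).count c : ℕ) : ℤ) := by
  exact FreeAbelianGroup.lift_apply_of _ _

lemma np_of_Phi {M N : FGMod R} (h : Phi R (ITcls R M) = Phi R (ITcls R N)) : np M = np N := by
  classical
  rw [Phi_cls, Phi_cls] at h
  ext c
  have := congrFun h c
  exact_mod_cast this

lemma np_of_cls {M N : FGMod R} (h : ITcls R M = ITcls R N) : np M = np N :=
  np_of_Phi (by rw [h])

lemma cls_core (M : FGMod R) : ITcls R M = ITcls R (core (np M)) := by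
  obtain ⟨P, hP, e⟩ := exists_core_np M
  rw [cls_prod' e, cls_proj hP, add_zero]

lemma Phi_inj : Function.Injective (Phi R) := by
  rw [injective_iff_map_eq_zero]
  intro x hx
  obtain ⟨M, N, rfl⟩ := exists_sub x
  rw [map_sub, sub_eq_zero] at hx
  rw [sub_eq_zero, cls_core M, cls_core N, np_of_Phi hx]

lemma torsion_free (k : ℤ) (hk : k ≠ 0) (x : ITK R) (h : k • x = 0) : x = 0 := by
  apply Phi_inj
  rw [map_zero]
  have := congrArg (Phi R) h
  rw [map_zsmul, map_zero] at this
  exact (smul_eq_zero.1 this).resolve_left hk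

instance : Module.IsTorsionFree ℤ (ITK R) :=
  Function.Injective.moduleIsTorsionFree (Phi R) Phi_inj (fun k x => map_zsmul (Phi R) k x)

lemma summand_np {X N : FGMod R} (h : X.IsSummand N) : np X ≤ np N := by
  obtain ⟨N', e⟩ := summand_iff.1 h
  rw [np_iso e, np_prod]
  exact Multiset.le_add_right _ _

lemma gen_finite (M : FGMod R) :
    {x | ∃ N : FGMod R, N.IsSummand M ∧ N.Indec ∧ ¬N.Proj ∧ x = ITcls R N}.Finite := by
  classical
  refine Set.Finite.subset (((dm M).toFinset.image
    (fun c => ITcls R (Quotient.out c))).finite_toSet) ?_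
  rintro x ⟨N, h, hN, -, rfl⟩
  obtain ⟨N', e⟩ := summand_iff.1 h
  have hm : mk N ∈ dm M := by
    rw [dm_iso e, dm_prod, dm_indec hN]; simp
  rw [Finset.mem_coe, Finset.mem_image]
  exact ⟨mk N, by simpa using hm, cls_iso (out_iso N)⟩

lemma cls_mem_gen {A M : FGMod R} (h : A.IsSummand M) : ITcls R A ∈ ITgen R M := by
  obtain ⟨l, hl, e⟩ := exists_decomp A
  obtain ⟨A', e'⟩ := summand_iff.1 h
  rw [cls_iso e, cls_dsum]
  apply AddSubgroup.list_sum_mem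
  intro x hx
  obtain ⟨X, hX, rfl⟩ := List.mem_map.1 hx
  by_cases hp : X.Proj
  · rw [cls_proj hp]; exact zero_mem _
  · apply AddSubgroup.subset_closure
    refine ⟨X, ?_, hl X hX, hp, rfl⟩
    obtain ⟨s, t, rfl⟩ := List.append_of_mem hX
    rw [summand_iff]
    refine ⟨(dsum (s ++ t)).prod A', ?_⟩
    exact (e'.trans ((e.trans (dsum_perm List.perm_middle)).prod (FGMod.Iso.refl A'))).trans
      (FGMod.Iso.assoc _ _ _)

variable {OmK : AddMonoid.End (ITK R)} (hOm : IsSyzygyEnd R OmK)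

/-- the subgroup `Ω^i⟨M⟩` as a ℤ-submodule -/
noncomputable abbrev Hs (OmK : AddMonoid.End (ITK R)) (M : FGMod R) (i : ℕ) :
    Submodule ℤ (ITK R) :=
  AddSubgroup.toIntSubmodule
    ((ITgen R M).map ((OmK ^ i : AddMonoid.End (ITK R)) : ITK R →+ ITK R))

lemma mem_Hs {M : FGMod R} {i : ℕ} {x : ITK R} :
    x ∈ Hs OmK M i ↔ ∃ y ∈ ITgen R M, (OmK ^ i) y = x := Iff.rfl

instance (M : FGMod R) (i : ℕ) : Module.Finite ℤ (Hs OmK M i) := by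
  rw [Module.Finite.iff_fg, Submodule.fg_iff_addSubgroup_fg]
  exact (AddSubgroup.fg_iff _).2
    ⟨_, (AddMonoidHom.map_closure _ _).symm, (gen_finite M).image _⟩

lemma Hs_map (M : FGMod R) (i j : ℕ) :
    (Hs OmK M i).map (((OmK ^ j : AddMonoid.End (ITK R)) : ITK R →+ ITK R).toIntLinearMap)
      = Hs OmK M (i + j) := by
  ext x
  rw [Submodule.mem_map, mem_Hs]
  constructor
  · rintro ⟨_, ⟨y, hy, rfl⟩, rfl⟩
    exact ⟨y, hy, by rw [add_comm, pow_add]; rfl⟩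
  · rintro ⟨y, hy, rfl⟩
    exact ⟨(OmK ^ i) y, ⟨y, hy, rfl⟩, by rw [add_comm i j, pow_add]; rfl⟩

lemma rk_anti (M : FGMod R) : Antitone fun i => Module.finrank ℤ (Hs OmK M i) := by
  apply antitone_nat_of_succ_le
  intro i
  rw [← Hs_map M i 1]
  exact Submodule.finrank_map_le _ _

lemma phi_spec (M : FGMod R) (i : ℕ) (hi : phiIT R OmK M ≤ i) :
    Module.finrank ℤ (Hs OmK M i) = Module.finrank ℤ (Hs OmK M (phiIT R OmK M)) := by
  have hne : {n | ∀ i, n ≤ i →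
    rkIT R ((ITgen R M).map ((OmK ^ i : AddMonoid.End (ITK R)) : ITK R →+ ITK R))
      = rkIT R ((ITgen R M).map ((OmK ^ n : AddMonoid.End (ITK R)) : ITK R →+ ITK R))}.Nonempty := by
    obtain ⟨n, hn⟩ := WellFoundedGT.monotone_chain_condition
      (α := ℕᵒᵈ) ⟨fun i => OrderDual.toDual (Module.finrank ℤ (Hs OmK M i)),
        fun i j h => rk_anti M h⟩
    exact ⟨n, fun i hi => (OrderDual.toDual_inj.1 (hn i hi)).symm⟩
  exact Nat.sInf_mem hne i hi

lemma stable_inj (M : FGMod R) (x : ITK R) (hx : x ∈ ITgen R M) (j : ℕ)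
    (h : (OmK ^ (phiIT R OmK M + j)) x = 0) : (OmK ^ (phiIT R OmK M)) x = 0 := by
  set m := phiIT R OmK M with hm
  let F := (((OmK ^ j : AddMonoid.End (ITK R)) : ITK R →+ ITK R).toIntLinearMap).domRestrict
    (Hs OmK M m)
  have h1 : LinearMap.range F = Hs OmK M (m + j) := by
    rw [LinearMap.range_domRestrict, Hs_map]
  have h2 := Submodule.finrank_quotient_add_finrank (LinearMap.ker F)
  rw [F.quotKerEquivRange.finrank_eq] at h2
  rw [h1, phi_spec M (m + j) (by omega), ← hm] at h2
  have h3 : Module.finrank ℤ (LinearMap.ker F) = 0 := by omega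
  have h4 : (⟨(OmK ^ m) x, ⟨x, hx, rfl⟩⟩ : Hs OmK M m) ∈ LinearMap.ker F := by
    rw [LinearMap.mem_ker]
    rw [add_comm, pow_add] at h
    exact h
  rw [Module.finrank_eq_zero_iff] at h3
  obtain ⟨a, ha, h5⟩ := h3 ⟨_, h4⟩
  have h6 : a • (OmK ^ m) x = 0 := congrArg (fun z => ((z : LinearMap.ker F) : Hs OmK M m).1) h5
  exact torsion_free a ha _ h6

include hOm

lemma Om_ker {P Y : FGMod R} (p : P →ₗ[Rᵐᵒᵖ] Y) (hP : P.Proj) (hp : Function.Surjective p) :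
    OmK (ITcls R Y) = ITcls R (kr p) := by
  obtain ⟨Q, q, hq⟩ := exists_cover Y
  rw [hOm Y (kr q) ⟨Q, q, hq, ⟨LinearEquiv.refl _ _⟩⟩]
  have h1 : Module.Projective Rᵐᵒᵖ P := hP
  have h2 : Module.Projective Rᵐᵒᵖ Q := hq.1
  have e : ((kr p).prod Q).Iso ((kr q).prod P) := schanuel p q hp hq.2.1
  have h3 := cls_prod' e
  rw [cls_prod' (FGMod.Iso.refl ((kr p).prod Q)), cls_proj hP, cls_proj hq.1] at h3
  simpa using h3.symm

lemma Om_syzN {n : ℕ} {M N : FGMod R} (h : IsSyzygyN n M N) :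
    (OmK ^ n) (ITcls R M) = ITcls R N := by
  induction n generalizing M with
  | zero => exact cls_iso h
  | succ n ih =>
    obtain ⟨L, hL, h'⟩ := h
    rw [pow_succ]
    change (OmK ^ n) (OmK (ITcls R M)) = _
    rw [hOm M L hL, ih h']

lemma Om_zero {n : ℕ} {M : FGMod R} (h : HasPdLE n M) (i : ℕ) (hi : n ≤ i) :
    (OmK ^ i) (ITcls R M) = 0 := by
  obtain ⟨N, hN⟩ := exists_syzN i M
  rw [Om_syzN hOm hN]
  apply cls_proj
  rw [← PD_one_iff]
  exact PD_syzN (k := 0) hN (((PD_iff _ _).1 h).mono (by omega))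

lemma psi_le_pd {C : FGMod R} {n : ℕ} (h : HasPdLE n C) : psiIT R OmK C ≤ n := by
  have hz : ∀ i, n ≤ i → Hs OmK C i = ⊥ := by
    intro i hi
    rw [eq_bot_iff]
    rintro _ ⟨y, hy, rfl⟩
    have : ITgen R C ≤ AddMonoidHom.ker ((OmK ^ i : AddMonoid.End (ITK R)) : ITK R →+ ITK R) := by
      rw [ITgen, AddSubgroup.closure_le]
      rintro _ ⟨N, hN, -, -, rfl⟩
      obtain ⟨N', e⟩ := summand_iff.1 hN
      exact Om_zero hOm (n := n) ((PD_iff _ _).2 ((((PD_iff _ _).1 h).of_iso e).left)) i hi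
    exact this hy
  have hphi : phiIT R OmK C ≤ n := by
    apply Nat.sInf_le
    intro i hi
    change Module.finrank ℤ (Hs OmK C i) = Module.finrank ℤ (Hs OmK C n)
    rw [hz i hi, hz n le_rfl]
  have hs : sSup {d | ∃ N X : FGMod R, IsSyzygyN (phiIT R OmK C) C N ∧
      X.IsSummand N ∧ FinPd X ∧ d = pdIT X} ≤ n - phiIT R OmK C := by
    apply csSup_le'
    rintro _ ⟨N, X, hN, hX, -, rfl⟩
    apply pdIT_le
    rw [PD_iff]
    obtain ⟨N', e⟩ := summand_iff.1 hX
    have h1 : PD N (n - phiIT R OmK C + 1) :=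
      PD_syzN hN (((PD_iff _ _).1 h).mono (by omega))
    exact (h1.of_iso e).left
  unfold psiIT
  omega

/-- One step: pass to syzygies in a short exact sequence. -/
lemma horseshoe {A B C : FGMod R} (f : A →ₗ[Rᵐᵒᵖ] B) (g : B →ₗ[Rᵐᵒᵖ] C)
    (hf : Function.Injective f) (hg : Function.Surjective g)
    (hfg : LinearMap.range f = LinearMap.ker g) :
    ∃ (X Y Z : FGMod R) (f' : X →ₗ[Rᵐᵒᵖ] Y) (g' : Y →ₗ[Rᵐᵒᵖ] Z),
      Function.Injective f' ∧ Function.Surjective g' ∧ LinearMap.range f' = LinearMap.ker g' ∧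
      ITcls R X = OmK (ITcls R A) ∧ ITcls R Y = OmK (ITcls R B) ∧
      ∀ k, PD C (k + 2) ↔ PD Z (k + 1) := by
  obtain ⟨P, p, hP, hp⟩ := exists_free A
  obtain ⟨Q, q, hQ, hq⟩ := exists_free C
  have hQ' : Module.Projective Rᵐᵒᵖ Q := hQ
  obtain ⟨s, hs⟩ := Module.projective_lifting_property g q hg
  have hs' : ∀ x, g (s x) = q x := fun x => LinearMap.congr_fun hs x
  have hgf : ∀ x, g (f x) = 0 := fun x => by
    have : f x ∈ LinearMap.ker g := hfg ▸ ⟨x, rfl⟩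
    exact this
  have hlift : ∀ b, g b = 0 → ∃ x, f (p x) = b := fun b hb => by
    have : b ∈ LinearMap.range f := by rw [hfg]; exact hb
    obtain ⟨a, rfl⟩ := this
    obtain ⟨x, rfl⟩ := hp a
    exact ⟨x, rfl⟩
  let h : (P.prod Q) →ₗ[Rᵐᵒᵖ] B := ((f ∘ₗ p).coprod s : (P × Q) →ₗ[Rᵐᵒᵖ] B)
  have hh : ∀ (x : P) (y : Q), h (x, y) = f (p x) + s y := fun x y => rfl
  have hsurj : Function.Surjective h := by
    intro b
    obtain ⟨y, hy⟩ := hq (g b)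
    obtain ⟨x, hx⟩ := hlift (b - s y) (by rw [map_sub, hs', hy, sub_self])
    exact ⟨(x, y), by rw [hh, hx]; simp⟩
  let i1 : LinearMap.ker p →ₗ[Rᵐᵒᵖ] LinearMap.ker h :=
    LinearMap.codRestrict (LinearMap.ker h)
      ((LinearMap.inl Rᵐᵒᵖ P Q ∘ₗ (LinearMap.ker p).subtype : _ →ₗ[Rᵐᵒᵖ] (P × Q)))
      (by
        rintro ⟨x, hx⟩
        change h (x, 0) = 0
        rw [hh, LinearMap.mem_ker.1 hx]; simp)
  let i2 : LinearMap.ker h →ₗ[Rᵐᵒᵖ] LinearMap.ker q :=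
    LinearMap.codRestrict (LinearMap.ker q)
      ((LinearMap.snd Rᵐᵒᵖ P Q : (P × Q) →ₗ[Rᵐᵒᵖ] Q) ∘ₗ (LinearMap.ker h).subtype)
      (by
        rintro ⟨⟨x, y⟩, hxy⟩
        change q y = 0
        have h1 : f (p x) + s y = 0 := hxy
        have h2 := congrArg g h1
        rw [map_add, hgf, hs', map_zero, zero_add] at h2
        exact h2)
  refine ⟨kr p, kr h, kr q, i1, i2, ?_, ?_, ?_, (Om_ker hOm p hP hp).symm,
    (Om_ker hOm h (hP.prod hQ) hsurj).symm, fun k => PD_ker q hQ hq k⟩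
  · rintro ⟨x, hx⟩ ⟨y, hy⟩ hxy
    have h1 : ((x, 0) : P × Q) = (y, 0) := congrArg Subtype.val hxy
    exact Subtype.ext (congrArg Prod.fst h1)
  · rintro ⟨y, hy⟩
    obtain ⟨x, hx⟩ := hlift (-(s y)) (by rw [map_neg, hs', LinearMap.mem_ker.1 hy, neg_zero])
    refine ⟨⟨(x, y), ?_⟩, rfl⟩
    change h (x, y) = 0
    rw [hh, hx]; simp
  · ext z
    constructor
    · rintro ⟨x, rfl⟩
      rfl
    · intro hz
      obtain ⟨⟨x, y⟩, hxy⟩ := z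
      have hz' : i2 ⟨(x, y), hxy⟩ = 0 := hz
      have hy : y = 0 := congrArg Subtype.val hz'
      subst hy
      have h1 : f (p x) + s 0 = 0 := hxy
      rw [map_zero, add_zero] at h1
      have h2 : p x = 0 := hf (by rw [h1, map_zero])
      exact ⟨⟨x, h2⟩, rfl⟩

lemma horseshoeN (i : ℕ) {A B C : FGMod R} (f : A →ₗ[Rᵐᵒᵖ] B) (g : B →ₗ[Rᵐᵒᵖ] C)
    (hf : Function.Injective f) (hg : Function.Surjective g)
    (hfg : LinearMap.range f = LinearMap.ker g) :
    ∃ (X Y Z : FGMod R) (f' : X →ₗ[Rᵐᵒᵖ] Y) (g' : Y →ₗ[Rᵐᵒᵖ] Z),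
      Function.Injective f' ∧ Function.Surjective g' ∧ LinearMap.range f' = LinearMap.ker g' ∧
      ITcls R X = (OmK ^ i) (ITcls R A) ∧ ITcls R Y = (OmK ^ i) (ITcls R B) ∧
      ∀ k, PD C (k + i + 1) ↔ PD Z (k + 1) := by
  induction i generalizing A B C with
  | zero => exact ⟨A, B, C, f, g, hf, hg, hfg, rfl, rfl, fun k => Iff.rfl⟩
  | succ i ih =>
    obtain ⟨X, Y, Z, f', g', h1, h2, h3, h4, h5, h6⟩ := horseshoe hOm f g hf hg hfg
    obtain ⟨X', Y', Z', f'', g'', h1', h2', h3', h4', h5', h6'⟩ := ih f' g' h1 h2 h3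
    refine ⟨X', Y', Z', f'', g'', h1', h2', h3', ?_, ?_, fun k => ?_⟩
    · rw [h4', h4, pow_succ]; rfl
    · rw [h5', h5, pow_succ]; rfl
    · rw [← h6' k]; exact h6 (k + i)

lemma psi_bdd (M : FGMod R) : BddAbove {d | ∃ N X : FGMod R, IsSyzygyN (phiIT R OmK M) M N ∧
      X.IsSummand N ∧ FinPd X ∧ d = pdIT X} := by
  obtain ⟨N0, hN0⟩ := exists_syzN (phiIT R OmK M) M
  classical
  refine (Set.Finite.subset (((np N0).powerset.toFinset.image
    (fun s => pdIT (core s))).finite_toSet) ?_).bddAbove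
  rintro _ ⟨N, X, hN, hX, -, rfl⟩
  rw [Finset.mem_coe, Finset.mem_image]
  refine ⟨np X, ?_, (pdIT_core X).symm⟩
  have : np N = np N0 := np_of_cls (by rw [← Om_syzN hOm hN, Om_syzN hOm hN0])
  rw [Multiset.mem_toFinset, Multiset.mem_powerset, ← this]
  exact summand_np hX

theorem main (A B C : FGMod R) (f : A →ₗ[Rᵐᵒᵖ] B) (g : B →ₗ[Rᵐᵒᵖ] C)
    (hf : Function.Injective f) (hg : Function.Surjective g)
    (hfg : LinearMap.range f = LinearMap.ker g) (hC : FinPd C) :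
    psiIT R OmK C ≤ psiIT R OmK (A.prod B) + 1 := by
  obtain ⟨n, hn⟩ := hC
  have hn' := (PD_iff _ _).1 hn
  set m := phiIT R OmK (A.prod B) with hm
  have hsA : A.IsSummand (A.prod B) := summand_iff.2 ⟨B, FGMod.Iso.refl _⟩
  have hsB : B.IsSummand (A.prod B) := summand_iff.2 ⟨A, FGMod.Iso.comm _ _⟩
  -- classes agree eventually
  have hev : (OmK ^ (m + n)) (ITcls R A - ITcls R B) = 0 := by
    obtain ⟨X, Y, Z, f', g', h1, h2, h3, h4, h5, h6⟩ := horseshoeN hOm (m + n) f g hf hg hfg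
    have hZ : Z.Proj := PD_one_iff.1 ((h6 0).1 (hn'.mono (by omega)))
    have hZ' : Module.Projective Rᵐᵒᵖ Z := hZ
    obtain ⟨s, hs⟩ := Module.projective_lifting_property g' LinearMap.id h2
    have hs' : ∀ x, g' (s x) = x := fun x => LinearMap.congr_fun hs x
    have hgf : ∀ x, g' (f' x) = 0 := fun x => by
      have : f' x ∈ LinearMap.ker g' := h3 ▸ ⟨x, rfl⟩
      exact this
    have e : (X.prod Z).Iso Y := by
      refine ⟨LinearEquiv.ofBijective (f'.coprod s : (X × Z) →ₗ[Rᵐᵒᵖ] Y) ⟨?_, ?_⟩⟩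
      · rw [← LinearMap.ker_eq_bot, eq_bot_iff]
        rintro ⟨x, z⟩ hxz
        have h : f' x + s z = 0 := hxz
        have hz : z = 0 := by
          have := congrArg g' h
          simpa [hgf, hs'] using this
        subst hz
        rw [map_zero, add_zero] at h
        have : x = 0 := h1 (by rw [h, map_zero])
        subst this
        rfl
      · intro y
        have : y - s (g' y) ∈ LinearMap.range f' := by
          rw [h3, LinearMap.mem_ker, map_sub, hs', sub_self]
        obtain ⟨x, hx⟩ := this
        exact ⟨(x, g' y), by simp [hx]⟩
    rw [map_sub, ← h4, ← h5, cls_prod' e.symm, cls_proj hZ, add_zero, sub_self]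
  have hst : (OmK ^ m) (ITcls R A - ITcls R B) = 0 :=
    stable_inj (A.prod B) _ (sub_mem (cls_mem_gen hsA) (cls_mem_gen hsB)) n hev
  obtain ⟨X, Y, Z, f', g', h1, h2, h3, h4, h5, h6⟩ := horseshoeN hOm m f g hf hg hfg
  rw [map_sub, ← h4, ← h5, sub_eq_zero] at hst
  have hnp : np X = np Y := np_of_cls hst
  obtain ⟨P, hP, eX⟩ := exists_core_np X
  obtain ⟨Q, hQ, eY⟩ := exists_core_np Y
  rw [← hnp] at eY
  obtain ⟨U, V, eW, ⟨e0, he0⟩, hU⟩ := ext_main f' g' h1 h2 h3 hP hQ eX eY (n + 1)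
    ((h6 n).1 (hn'.mono (by omega)))
  have hUf : FinPd U := ⟨e0, (PD_iff _ _).2 (he0.mono (by omega))⟩
  have hUpd := (PD_iff _ _).1 (pdIT_spec hUf)
  have hZ := hU _ (by omega) hUpd
  have hCpd : HasPdLE (pdIT U + 1 + m) C := (PD_iff _ _).2 ((h6 (pdIT U + 1)).2 hZ)
  have hle := psi_le_pd hOm hCpd
  obtain ⟨N, hN⟩ := exists_syzN m (A.prod B)
  have hUN : U.IsSummand N := by
    have hcl : ITcls R N = ITcls R (X.prod Y) := by
      rw [← Om_syzN hOm hN, cls_prod' (FGMod.Iso.refl (A.prod B)), map_add, ← h4, ← h5,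
        cls_prod' (FGMod.Iso.refl (X.prod Y))]
    have hnpN : np N = np X + np Y := by rw [np_of_cls hcl, np_prod]
    obtain ⟨P', hP', eN⟩ := exists_core_np N
    rw [hnpN] at eN
    rw [summand_iff]
    refine ⟨(V.prod (core (np Y))).prod P', ?_⟩
    have e1 := eN.trans (((core_add (np X) (np Y)).trans
      (eW.prod (FGMod.Iso.refl _))).prod (FGMod.Iso.refl P'))
    exact (e1.trans ((FGMod.Iso.assoc _ _ _).prod (FGMod.Iso.refl P'))).trans
      (FGMod.Iso.assoc _ _ _)
  have hsup : pdIT U ≤ sSup {d | ∃ N X : FGMod R, IsSyzygyN (phiIT R OmK (A.prod B)) (A.prod B) N ∧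
      X.IsSummand N ∧ FinPd X ∧ d = pdIT X} :=
    le_csSup (psi_bdd hOm _) ⟨N, U, hN, hUN, hUf, rfl⟩
  have : psiIT R OmK (A.prod B) = m + sSup {d | ∃ N X : FGMod R,
      IsSyzygyN (phiIT R OmK (A.prod B)) (A.prod B) N ∧
      X.IsSummand N ∧ FinPd X ∧ d = pdIT X} := rfl
  omega

end kgrp
end ITAux
/-- If `0 → A → B → C → 0` is a short exact sequence of f.g. right
`R`-modules with `pd C` finite, then `ψ(C) ≤ ψ(A ⊕ B) + 1`. -/
theorem psi_le_of_shortExact (R : Type u) [Ring R] [IsArtinianRing Rᵐᵒᵖ]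
    (OmK : AddMonoid.End (ITK R)) (hOm : IsSyzygyEnd R OmK)
    (A B C : FGMod R) (f : A →ₗ[Rᵐᵒᵖ] B) (g : B →ₗ[Rᵐᵒᵖ] C)
    (hf : Function.Injective f) (hg : Function.Surjective g)
    (hfg : LinearMap.range f = LinearMap.ker g) (hC : FinPd C) :
    psiIT R OmK C ≤ psiIT R OmK (A.prod B) + 1 := by
  exact ITAux.main hOm A B C f g hf hg hfg hC
end
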